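/- arXiv:1812.04911 — 2 statements merged into one kernel-verified Lean document; each statement's English description precedes it below -/
import Mathlib

section
/- For every finite set X of n points in the plane ℝ² in general position (no three points on a line), there exist ⌊n/3⌋ pairwise vertex-disjoint triples of points of X such that the triangles they span are pairwise crossing, i.e., for any two of these triangles the topological boundaries of their convex hulls have nonempty intersection. -/
/-- A set `Y` of points in `ℝ^d` is in general position if every subset of size
at most `d+1` is affinely independent. -/
def InGeneralPosition (d : ℕ) (Y : Set (EuclideanSpace ℝ (Fin d))) : Prop :=
  ∀ s : Finset (EuclideanSpace ℝ (Fin d)), ↑s ⊆ Y → s.card ≤ d + 1 →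
    AffineIndependent ℝ (fun p : s => (p : EuclideanSpace ℝ (Fin d)))

namespace CrossTri

/-- The plane. -/
abbrev E2 := EuclideanSpace ℝ (Fin 2)

/-- Orientation determinant of `p, q` seen from `O`. -/
def cr (O p q : E2) : ℝ := (p 0 - O 0) * (q 1 - O 1) - (p 1 - O 1) * (q 0 - O 0)

/-- Positively oriented triangle around `O`. -/
def Good (O : E2) (T : Finset E2) : Prop :=
  ∃ p : Fin 3 → E2, T = Finset.univ.image p ∧ ∀ i, 0 < cr O (p i) (p (i + 1))

lemma cr_self (O p : E2) : cr O p p = 0 := by unfold cr; ring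

lemma cr_swap (O p q : E2) : cr O p q = - cr O q p := by unfold cr; ring

lemma cr_cont (a b : E2) : Continuous (fun x => cr x a b) := by
  unfold cr; fun_prop

lemma mem_hull {x : E2} {p : Fin 3 → E2} (h : ∀ i, 0 < cr x (p i) (p (i + 1))) :
    x ∈ convexHull ℝ (Set.range p) := by
  set D := cr x (p 0) (p 1) + cr x (p 1) (p 2) + cr x (p 2) (p 0) with hD
  have h0 : 0 < cr x (p 0) (p 1) := h 0
  have h1 : 0 < cr x (p 1) (p 2) := h 1
  have h2 : 0 < cr x (p 2) (p 0) := h 2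
  have hDp : 0 < D := by positivity
  have key : x = (cr x (p 1) (p 2) / D) • p 0 + (cr x (p 2) (p 0) / D) • p 1
      + (cr x (p 0) (p 1) / D) • p 2 := by
    ext i
    have : x i * D = cr x (p 1) (p 2) * p 0 i + cr x (p 2) (p 0) * p 1 i
      + cr x (p 0) (p 1) * p 2 i := by
      rw [hD]; unfold cr
      fin_cases i <;> simp <;> ring
    simp only [PiLp.add_apply, PiLp.smul_apply, smul_eq_mul]
    field_simp
    linarith
  have hm : ∀ i, p i ∈ convexHull ℝ (Set.range p) := fun i => subset_convexHull _ _ ⟨i, rfl⟩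
  rw [key]
  have := (convex_convexHull ℝ (Set.range p)).sum_mem (t := Finset.univ)
    (w := ![cr x (p 1) (p 2) / D, cr x (p 2) (p 0) / D, cr x (p 0) (p 1) / D]) (z := p)
    (by intro i _; fin_cases i <;> simp <;> positivity)
    (by simp [Fin.sum_univ_three]; field_simp; rw [hD]; ring) (fun i _ => hm i)
  simpa [Fin.sum_univ_three] using this

lemma Good.mem_interior {O : E2} {T : Finset E2} (h : Good O T) :
    O ∈ interior (convexHull ℝ (T : Set E2)) := by
  obtain ⟨p, rfl, hp⟩ := h
  rw [_root_.mem_interior]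
  refine ⟨{x | ∀ i, 0 < cr x (p i) (p (i + 1))}, ?_, ?_, hp⟩
  · intro x hx
    simpa using mem_hull hx
  · simp only [Set.ofPred_forall]
    exact isOpen_iInter_of_finite fun i => isOpen_lt continuous_const (cr_cont _ _)

lemma pos_inj {O : E2} {p : Fin 3 → E2} (h : ∀ i, 0 < cr O (p i) (p (i + 1))) :
    Function.Injective p := by
  have h0 : p 0 ≠ p 1 := fun e => by have := h 0; simp [e, cr_self] at this
  have h1 : p 1 ≠ p 2 := fun e => by have := h 1; simp [e, cr_self] at this
  have h2 : p 2 ≠ p 0 := fun e => by have := h 2; simp [e, cr_self] at this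
  intro i j hij
  fin_cases i <;> fin_cases j <;> simp_all

lemma Good.card {O : E2} {T : Finset E2} (h : Good O T) : T.card = 3 := by
  obtain ⟨p, rfl, hp⟩ := h
  rw [Finset.card_image_of_injective _ (pos_inj hp)]
  simp

lemma good_mk {O a b c : E2} (h1 : 0 < cr O a b) (h2 : 0 < cr O b c) (h3 : 0 < cr O c a) :
    Good O {a, b, c} := by
  refine ⟨![a, b, c], ?_, ?_⟩
  · ext x; simp [Fin.exists_fin_succ, eq_comm]
  · intro i; fin_cases i <;> simpa

set_option synthInstance.maxHeartbeats 400000 in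
set_option synthInstance.maxSize 2000 in
lemma sign_matrix : ∀ M : Fin 3 → Fin 3 → Bool,
    (∀ i, ¬ (M i 0 = M i 1 ∧ M i 1 = M i 2)) → (∀ j, ¬ (M 0 j = M 1 j ∧ M 1 j = M 2 j)) →
    (∀ i j, ¬ (M i j ≠ M (i + 1) (j + 1) ∧ M i (j + 1) = M (i + 1) j)) →
    ∃ i j, M (i + 2) j = true ∧ M (i + 1) j = false ∧ M i (j + 1) = true ∧
      M i (j + 2) = false := by
  decide +kernel

lemma exists_swap_idx {O : E2} {p q : Fin 3 → E2} (hp : ∀ i, 0 < cr O (p i) (p (i + 1)))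
    (hq : ∀ i, 0 < cr O (q i) (q (i + 1))) (hne : ∀ i j, cr O (p i) (q j) ≠ 0) :
    ∃ i j, 0 < cr O (p (i + 2)) (q j) ∧ cr O (p (i + 1)) (q j) < 0 ∧
      0 < cr O (p i) (q (j + 1)) ∧ cr O (p i) (q (j + 2)) < 0 := by
  set M : Fin 3 → Fin 3 → Bool := fun i j => decide (0 < cr O (p i) (q j)) with hM
  have key := sign_matrix M
  have ht : ∀ i j, M i j = true ↔ 0 < cr O (p i) (q j) := by intro i j; simp [hM]
  have hf : ∀ i j, M i j = false ↔ cr O (p i) (q j) < 0 := by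
    intro i j; simp only [hM, decide_eq_false_iff_not, not_lt]
    exact ⟨fun h => lt_of_le_of_ne h (hne i j), le_of_lt⟩
  have hp0 := hp 0
  have hp1 := hp 1
  have hp2 := hp 2
  have hq0 := hq 0
  have hq1 := hq 1
  have hq2 := hq 2
  simp only [Fin.isValue, zero_add, Fin.reduceAdd] at hp0 hp1 hp2 hq0 hq1 hq2
  have k0 : ∀ i, ¬ (M i 0 = M i 1 ∧ M i 1 = M i 2) := by
    rintro i ⟨h1, h2⟩
    have id1 : cr O (q 1) (q 2) * cr O (p i) (q 0) + cr O (q 2) (q 0) * cr O (p i) (q 1)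
      + cr O (q 0) (q 1) * cr O (p i) (q 2) = 0 := by unfold cr; ring
    cases h : M i 0
    · have h1' := (hf _ _).1 (h1 ▸ h)
      have h2' := (hf _ _).1 (h2 ▸ h1 ▸ h)
      have h0' := (hf _ _).1 h
      have := mul_neg_of_pos_of_neg hq1 h0'
      have := mul_neg_of_pos_of_neg hq2 h1'
      have := mul_neg_of_pos_of_neg hq0 h2'
      linarith
    · have h1' := (ht _ _).1 (h1 ▸ h)
      have h2' := (ht _ _).1 (h2 ▸ h1 ▸ h)
      have h0' := (ht _ _).1 h
      have := mul_pos hq1 h0'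
      have := mul_pos hq2 h1'
      have := mul_pos hq0 h2'
      linarith
  have k1 : ∀ j, ¬ (M 0 j = M 1 j ∧ M 1 j = M 2 j) := by
    rintro i ⟨h1, h2⟩
    have id1 : cr O (p 1) (p 2) * cr O (p 0) (q i) + cr O (p 2) (p 0) * cr O (p 1) (q i)
      + cr O (p 0) (p 1) * cr O (p 2) (q i) = 0 := by unfold cr; ring
    cases h : M 0 i
    · have h1' := (hf _ _).1 (h1 ▸ h)
      have h2' := (hf _ _).1 (h2 ▸ h1 ▸ h)
      have h0' := (hf _ _).1 h
      have := mul_neg_of_pos_of_neg hp1 h0'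
      have := mul_neg_of_pos_of_neg hp2 h1'
      have := mul_neg_of_pos_of_neg hp0 h2'
      linarith
    · have h1' := (ht _ _).1 (h1 ▸ h)
      have h2' := (ht _ _).1 (h2 ▸ h1 ▸ h)
      have h0' := (ht _ _).1 h
      have := mul_pos hp1 h0'
      have := mul_pos hp2 h1'
      have := mul_pos hp0 h2'
      linarith
  have k2 : ∀ i j, ¬ (M i j ≠ M (i + 1) (j + 1) ∧ M i (j + 1) = M (i + 1) j) := by
    rintro i j ⟨h1, h2⟩
    have id1 : cr O (p i) (p (i + 1)) * cr O (q j) (q (j + 1)) =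
      cr O (p i) (q j) * cr O (p (i + 1)) (q (j + 1))
      - cr O (p i) (q (j + 1)) * cr O (p (i + 1)) (q j) := by unfold cr; ring
    have id2 := mul_pos (hp i) (hq j)
    have A : cr O (p i) (q j) * cr O (p (i + 1)) (q (j + 1)) < 0 := by
      cases h : M i j
      · have : M (i + 1) (j + 1) = true := by
          cases h' : M (i + 1) (j + 1)
          · exact absurd (h.trans h'.symm) h1
          · rfl
        exact mul_neg_of_neg_of_pos ((hf _ _).1 h) ((ht _ _).1 this)
      · have : M (i + 1) (j + 1) = false := by
          cases h' : M (i + 1) (j + 1)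
          · rfl
          · exact absurd (h.trans h'.symm) h1
        exact mul_neg_of_pos_of_neg ((ht _ _).1 h) ((hf _ _).1 this)
    have B : 0 < cr O (p i) (q (j + 1)) * cr O (p (i + 1)) (q j) := by
      cases h : M i (j + 1)
      · exact mul_pos_of_neg_of_neg ((hf _ _).1 h) ((hf _ _).1 (h2 ▸ h))
      · exact mul_pos ((ht _ _).1 h) ((ht _ _).1 (h2 ▸ h))
    linarith
  obtain ⟨i, j, h1, h2, h3, h4⟩ := key k0 k1 k2
  exact ⟨i, j, (ht _ _).1 h1, (hf _ _).1 h2, (ht _ _).1 h3, (hf _ _).1 h4⟩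

lemma univ_image_rot (p : Fin 3 → E2) (i : Fin 3) :
    Finset.univ.image p = {p i, p (i + 1), p (i + 2)} := by
  ext x
  fin_cases i <;> simp [Fin.exists_fin_succ, eq_comm] <;> tauto

/-- Exchange lemma. -/
lemma exists_swap {O : E2} {S T : Finset E2} (hS : Good O S) (hT : Good O T)
    (hne : ∀ x ∈ S, ∀ y ∈ T, cr O x y ≠ 0) :
    ∃ a b c A B C : E2, S = {a, b, c} ∧ T = {A, B, C} ∧ Good O {A, b, c} ∧
      Good O {a, B, C} := by
  obtain ⟨p, rfl, hp⟩ := hS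
  obtain ⟨q, rfl, hq⟩ := hT
  obtain ⟨i, j, h1, h2, h3, h4⟩ := exists_swap_idx hp hq
    (fun i j => hne _ (by simp) _ (by simp))
  refine ⟨p i, p (i + 1), p (i + 2), q j, q (j + 1), q (j + 2), univ_image_rot _ _,
    univ_image_rot _ _, good_mk ?_ ?_ h1, good_mk h3 ?_ ?_⟩
  · rw [cr_swap]; linarith
  · have := hp (i + 1); rwa [add_assoc] at this
  · have := hq (j + 1); rwa [add_assoc] at this
  · rw [cr_swap]; linarith

lemma frontier_conn {s : Set E2} (hs : Convex ℝ s) (hc : IsCompact s)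
    (hi : (interior s).Nonempty) : IsPreconnected (frontier s) := by
  obtain ⟨h, -, -, h3⟩ := exists_homeomorph_image_interior_closure_frontier_eq_unitBall hs hi
    hc.isBounded
  have h1 : IsPreconnected (Metric.sphere (0 : E2) 1) :=
    isPreconnected_sphere (by rw [← Module.finrank_eq_rank]; simp) _ _
  rw [← h3] at h1
  exact h.isPreconnected_image.1 h1

lemma pre_split {F t : Set E2} (hF : IsPreconnected F) (ht : IsClosed t)
    (hd : F ∩ frontier t = ∅) (hn : (F ∩ t).Nonempty) : F ⊆ interior t := by
  have hfr : ∀ x ∈ F, x ∈ t → x ∈ interior t := by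
    intro x hx hxt
    by_contra hxi
    have : x ∈ F ∩ frontier t := ⟨hx, by rw [ht.frontier_eq]; exact ⟨hxt, hxi⟩⟩
    rw [hd] at this; exact this
  refine hF.subset_left_of_subset_union isOpen_interior ht.isOpen_compl ?_ ?_ ?_
  · exact Set.disjoint_left.2 fun x hx hx' => hx' (interior_subset hx)
  · intro x hx
    by_cases hxt : x ∈ t
    · exact Or.inl (hfr x hx hxt)
    · exact Or.inr hxt
  · obtain ⟨x, hx, hxt⟩ := hn
    exact ⟨x, hx, hfr x hx hxt⟩

lemma step_conn {s t : Set E2} {O : E2} (hs : Convex ℝ s) (ht : Convex ℝ t)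
    (hcs : IsCompact s) (hct : IsCompact t) (hOs : O ∈ interior s) (hOt : O ∈ interior t)
    (hd : frontier s ∩ frontier t = ∅) (hst : ¬ s ⊆ t) : frontier t ⊆ interior s := by
  refine pre_split (frontier_conn ht hct ⟨O, hOt⟩) hcs.isClosed (by rwa [Set.inter_comm]) ?_
  by_contra hne
  rw [Set.not_nonempty_iff_eq_empty, Set.inter_comm] at hne
  exact hst ((pre_split hs.isPreconnected hct.isClosed hne
    ⟨O, interior_subset hOs, interior_subset hOt⟩).trans interior_subset)

lemma nested {s t : Set E2} {O : E2} (hs : Convex ℝ s) (ht : Convex ℝ t)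
    (hcs : IsCompact s) (hct : IsCompact t) (hOs : O ∈ interior s) (hOt : O ∈ interior t)
    (hd : frontier s ∩ frontier t = ∅) : s ⊆ t ∨ t ⊆ s := by
  by_contra! hcon
  have h1 := step_conn hs ht hcs hct hOs hOt hd hcon.1
  have h2 := step_conn ht hs hct hcs hOt hOs (by rwa [Set.inter_comm]) hcon.2
  have ho : IsOpen (s ∪ t) := by
    rw [isOpen_iff_forall_mem_open]
    have hA : ∀ x ∈ s ∪ t, x ∈ interior s ∪ interior t := by
      rintro x (hx | hx)
      · by_cases hxi : x ∈ interior s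
        · exact Or.inl hxi
        · exact Or.inr (h2 (by rw [hcs.isClosed.frontier_eq]; exact ⟨hx, hxi⟩))
      · by_cases hxi : x ∈ interior t
        · exact Or.inr hxi
        · exact Or.inl (h1 (by rw [hct.isClosed.frontier_eq]; exact ⟨hx, hxi⟩))
    intro x hx
    exact ⟨interior s ∪ interior t, Set.union_subset_union interior_subset interior_subset,
      isOpen_interior.union isOpen_interior, hA x hx⟩
  have hcl : IsClopen (s ∪ t) := ⟨(hcs.union hct).isClosed, ho⟩
  rcases isClopen_iff.1 hcl with h | h
  · have : O ∈ s ∪ t := Or.inl (interior_subset hOs)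
    rw [h] at this; exact this
  · exact noncompact_univ E2 (h ▸ hcs.union hct)

/-- A vertex of a triangle is not in the hull of other points of the triangle. -/
lemma vertex_notMem {T : Finset E2} (hT : AffineIndependent ℝ (fun p : T => (p : E2)))
    {A : E2} (hA : A ∈ T) {S : Set E2} (hS : S ⊆ convexHull ℝ (T : Set E2)) (hAS : A ∉ S) :
    A ∉ convexHull ℝ S := by
  intro hmem
  have hsub : convexHull ℝ S ⊆ convexHull ℝ (T : Set E2) :=
    convexHull_min hS (convex_convexHull _ _)
  have hAT : A ∈ (convexHull ℝ (T : Set E2)).extremePoints ℝ := by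
    by_contra hne
    have hsub2 : (convexHull ℝ (T : Set E2)).extremePoints ℝ ⊆ (T : Set E2) \ {A} := by
      intro x hx
      refine ⟨extremePoints_convexHull_subset hx, ?_⟩
      rintro rfl
      exact hne hx
    have h1 := closure_convexHull_extremePoints
      (T.finite_toSet.isCompact_convexHull ℝ) (convex_convexHull ℝ (T : Set E2))
    have h2 : convexHull ℝ (T : Set E2) ⊆ convexHull ℝ ((T : Set E2) \ {A}) := by
      rw [← h1]
      refine closure_minimal (convexHull_mono hsub2) ?_
      exact (T.finite_toSet.subset Set.sdiff_subset).isClosed_convexHull ℝ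
    have h3 := convexHull_subset_affineSpan _ (h2 (subset_convexHull ℝ _ hA))
    have h4 := hT.notMem_affineSpan_sdiff ⟨A, hA⟩ Set.univ
    apply h4
    have e : Set.image (fun p : T => (p : E2)) (Set.univ \ {⟨A, hA⟩}) = (T : Set E2) \ {A} := ?_
    · rw [e]; exact h3
    ext x
    simp only [Set.mem_image, Set.mem_sdiff, Set.mem_univ, true_and, Set.mem_singleton_iff]
    constructor
    · rintro ⟨y, hy, rfl⟩
      exact ⟨y.2, fun h => hy (Subtype.ext h)⟩
    · rintro ⟨hx, hxA⟩
      exact ⟨⟨x, hx⟩, fun h => hxA (congrArg Subtype.val h), rfl⟩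
  exact hAS (extremePoints_convexHull_subset
    (inter_extremePoints_subset_extremePoints_of_subset hsub ⟨hmem, hAT⟩))

lemma tri_interior {T : Finset E2} (hT : AffineIndependent ℝ (fun p : T => (p : E2)))
    (h3 : T.card = 3) : (interior (convexHull ℝ (T : Set E2))).Nonempty := by
  rw [interior_convexHull_nonempty_iff_affineSpan_eq_top]
  have := hT.affineSpan_eq_top_iff_card_eq_finrank_add_one.2 (by simp [h3])
  simpa using this

lemma center_set {X : Finset E2} (hgp : InGeneralPosition 2 (X : Set E2)) {N : ℕ}
    (hX : X.card = 3 * N) (hN : 0 < N) :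
    (⋂ S ∈ X.powerset.filter (fun S => 2 * N + 1 ≤ S.card),
      interior (convexHull ℝ (S : Set E2))).Nonempty := by
  classical
  apply Convex.helly_theorem' (𝕜 := ℝ)
  · intro S _
    exact (convex_convexHull ℝ _).interior
  · intro I hI hIc
    have hIc : I.card ≤ 3 := by simpa using hIc
    set W := I.biUnion (fun S => X \ S) with hW
    have hWc : W.card ≤ 3 * (N - 1) := by
      calc W.card ≤ I.card * (N - 1) := by
            apply Finset.card_biUnion_le_card_mul
            intro S hS
            have := hI hS
            simp only [Finset.mem_filter, Finset.mem_powerset] at this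
            rw [Finset.card_sdiff_of_subset this.1]
            omega
        _ ≤ 3 * (N - 1) := Nat.mul_le_mul_right _ hIc
    have hWX : W ⊆ X := by
      intro x hx
      simp only [hW, Finset.mem_biUnion, Finset.mem_sdiff] at hx
      obtain ⟨_, _, h, _⟩ := hx
      exact h
    have h3 : 3 ≤ (X \ W).card := by
      rw [Finset.card_sdiff_of_subset hWX]; omega
    obtain ⟨t, ht, htc⟩ := Finset.exists_subset_card_eq h3
    have htX : (t : Set E2) ⊆ X := fun x hx => (Finset.mem_sdiff.1 (ht hx)).1
    obtain ⟨y, hy⟩ := tri_interior (hgp t htX (by omega)) htc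
    refine ⟨y, ?_⟩
    simp only [Set.mem_iInter]
    intro S hS
    refine interior_mono (convexHull_mono ?_) hy
    intro x hx
    have hx' := Finset.mem_sdiff.1 (ht hx)
    by_contra hxS
    exact hx'.2 (Finset.mem_biUnion.2 ⟨S, hS, Finset.mem_sdiff.2 ⟨hx'.1, hxS⟩⟩)

/-- Perpendicular vector. -/
noncomputable def perp (p q : E2) : E2 := !₂[-(q 1 - p 1), q 0 - p 0]

lemma sq_pos_of_ne {p q : E2} (h : p ≠ q) : 0 < (q 0 - p 0) ^ 2 + (q 1 - p 1) ^ 2 := by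
  by_contra hc
  apply h
  have h0 : q 0 - p 0 = 0 := by nlinarith [sq_nonneg (q 0 - p 0), sq_nonneg (q 1 - p 1)]
  have h1 : q 1 - p 1 = 0 := by nlinarith [sq_nonneg (q 0 - p 0), sq_nonneg (q 1 - p 1)]
  ext i
  fin_cases i
  · simp; linarith
  · simp; linarith

lemma dense_ne {p q : E2} (h : p ≠ q) : Dense {x : E2 | cr x p q ≠ 0} := by
  intro x
  rw [mem_closure_iff_nhds]
  intro U hU
  have hc : Continuous (fun t : ℝ => x + t • perp p q) := by fun_prop
  have h0 : (fun t : ℝ => x + t • perp p q) ⁻¹' U ∈ nhds (0 : ℝ) :=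
    hc.continuousAt.preimage_mem_nhds (by simpa using hU)
  set D := (q 0 - p 0) ^ 2 + (q 1 - p 1) ^ 2 with hD
  have hDp : 0 < D := sq_pos_of_ne h
  have hf : ∀ t : ℝ, cr (x + t • perp p q) p q = cr x p q + t * D := by
    intro t
    simp [cr, perp, hD]; ring
  obtain ⟨t, ht1, ht2⟩ := mem_closure_iff_nhds.1 (dense_compl_singleton (-(cr x p q) / D) 0) _ h0
  refine ⟨x + t • perp p q, ht1, ?_⟩
  simp only [Set.mem_ofPred_eq, hf]
  intro hz
  apply ht2
  simp only [Set.mem_singleton_iff]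
  field_simp
  linarith

lemma exists_center {X : Finset E2} (hgp : InGeneralPosition 2 (X : Set E2)) {N : ℕ}
    (hX : X.card = 3 * N) (hN : 0 < N) :
    ∃ O : E2, (∀ p ∈ X, ∀ q ∈ X, p ≠ q → cr O p q ≠ 0) ∧
      ∀ p ∈ X, N ≤ (X.filter (fun q => 0 < cr O p q)).card := by
  classical
  have hne := center_set hgp hX hN
  have hop : IsOpen (⋂ S ∈ X.powerset.filter (fun S => 2 * N + 1 ≤ S.card),
      interior (convexHull ℝ (S : Set E2))) := isOpen_biInter_finset fun _ _ => isOpen_interior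
  have hd : Dense (⋂ z ∈ {z : E2 × E2 | z.1 ∈ X ∧ z.2 ∈ X ∧ z.1 ≠ z.2},
      {x : E2 | cr x z.1 z.2 ≠ 0}) := by
    apply dense_biInter_of_isOpen
    · intro z _
      exact isOpen_ne_fun (cr_cont _ _) continuous_const
    · apply Set.Finite.countable
      apply (X ×ˢ X).finite_toSet.subset
      rintro ⟨a, b⟩ ⟨h1, h2, -⟩
      simp_all
    · rintro z ⟨-, -, h⟩
      exact dense_ne h
  obtain ⟨O, hO1, hO2⟩ := hd.inter_open_nonempty _ hop hne
  simp only [Set.mem_iInter] at hO1 hO2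
  have hgen : ∀ p ∈ X, ∀ q ∈ X, p ≠ q → cr O p q ≠ 0 := fun p hp q hq h => hO2 (p, q) ⟨hp, hq, h⟩
  refine ⟨O, hgen, ?_⟩
  intro p hp
  by_contra! hlt
  have hpO : O ≠ p := by
    rintro rfl
    have : 1 < X.card := by omega
    obtain ⟨q, hq, hqO⟩ := Finset.exists_mem_ne this O
    exact hgen O hp q hq hqO.symm (by simp [cr])
  have hcard := Finset.card_filter_add_card_filter_not (s := X) (fun q => 0 < cr O p q)
  have hOi := hO1 (X.filter (fun q => ¬ 0 < cr O p q)) (by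
    simp only [Finset.mem_filter, Finset.mem_powerset]
    exact ⟨Finset.filter_subset _ _, by omega⟩)
  have hconv : Convex ℝ {x : E2 | cr O p x ≤ 0} := by
    intro x hx y hy a b ha hb hab
    simp only [Set.mem_ofPred_eq] at *
    have : cr O p (a • x + b • y) = a * cr O p x + b * cr O p y := by
      have hb' : b = 1 - a := by linarith
      subst hb'
      simp [cr]; ring
    rw [this]
    nlinarith
  have hsub : convexHull ℝ ((X.filter (fun q => ¬ 0 < cr O p q) : Finset E2) : Set E2) ⊆
      {x : E2 | cr O p x ≤ 0} := by
    apply convexHull_min _ hconv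
    intro x hx
    simp at hx
    exact hx.2
  have hnb : {x : E2 | cr O p x ≤ 0} ∈ nhds O :=
    Filter.mem_of_superset (mem_interior_iff_mem_nhds.1 hOi) hsub
  have hc : Continuous (fun t : ℝ => O + t • perp O p) := by fun_prop
  have h0 : (fun t : ℝ => O + t • perp O p) ⁻¹' {x : E2 | cr O p x ≤ 0} ∈ nhds (0 : ℝ) :=
    hc.continuousAt.preimage_mem_nhds (by simpa using hnb)
  obtain ⟨ε, hε, hball⟩ := Metric.mem_nhds_iff.1 h0
  have hm : ε / 2 ∈ Metric.ball (0 : ℝ) ε := by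
    simp [abs_of_pos hε]; linarith
  have h2 := hball hm
  simp only [Set.mem_preimage, Set.mem_ofPred_eq] at h2
  have hf : cr O p (O + (ε / 2) • perp O p) = ε / 2 * ((p 0 - O 0) ^ 2 + (p 1 - O 1) ^ 2) := by
    simp [cr, perp]; ring
  rw [hf] at h2
  have := mul_pos (half_pos hε) (sq_pos_of_ne hpO)
  linarith

/-- Argument of `p` seen from `O`. -/
noncomputable def ang (O p : E2) : ℝ := Complex.arg ⟨p 0 - O 0, p 1 - O 1⟩

lemma cr_ang (O p q : E2) : ∃ r : ℝ, 0 ≤ r ∧ cr O p q = r * Real.sin (ang O q - ang O p) := by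
  set z : ℂ := ⟨p 0 - O 0, p 1 - O 1⟩ with hz
  set w : ℂ := ⟨q 0 - O 0, q 1 - O 1⟩ with hw
  refine ⟨‖z‖ * ‖w‖, by positivity, ?_⟩
  have a1 : ‖z‖ * Real.cos (ang O p) = p 0 - O 0 := Complex.norm_mul_cos_arg z
  have a2 : ‖z‖ * Real.sin (ang O p) = p 1 - O 1 := Complex.norm_mul_sin_arg z
  have b1 : ‖w‖ * Real.cos (ang O q) = q 0 - O 0 := Complex.norm_mul_cos_arg w
  have b2 : ‖w‖ * Real.sin (ang O q) = q 1 - O 1 := Complex.norm_mul_sin_arg w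
  unfold cr
  rw [← a1, ← a2, ← b1, ← b2, Real.sin_sub]
  ring

lemma cr_pos_iff {O p q : E2} (h : cr O p q ≠ 0) :
    0 < cr O p q ↔ 0 < Real.sin (ang O q - ang O p) := by
  obtain ⟨r, hr, he⟩ := cr_ang O p q
  have hr' : 0 < r := lt_of_le_of_ne hr (by rintro rfl; simp at he; exact h he)
  rw [he]
  exact mul_pos_iff_of_pos_left hr'

lemma birch_angle {N : ℕ} (θ : Fin (3 * N) → ℝ) (hθ : StrictMono θ)
    (hlo : ∀ i, -Real.pi < θ i) (hhi : ∀ i, θ i ≤ Real.pi)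
    (hcount : ∀ i, N ≤ (Finset.univ.filter (fun k => 0 < Real.sin (θ k - θ i))).card) :
    (∀ i j : Fin (3 * N), j.1 = i.1 + N → 0 < N → 0 < Real.sin (θ j - θ i)) ∧
    (∀ i j : Fin (3 * N), j.1 = i.1 + 2 * N → 0 < N → 0 < Real.sin (θ i - θ j)) := by
  constructor
  · intro i j hij hN
    by_contra hcon
    have hlt : θ i < θ j := hθ (by rw [Fin.lt_def]; omega)
    have hpi : Real.pi ≤ θ j - θ i := by
      by_contra hp
      exact hcon (Real.sin_pos_of_pos_of_lt_pi (by linarith) (by linarith))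
    have hsub : Finset.univ.filter (fun k => 0 < Real.sin (θ k - θ i)) ⊆ Finset.Ioo i j := by
      intro k hk
      simp only [Finset.mem_filter, Finset.mem_univ, true_and] at hk
      rw [Finset.mem_Ioo]
      constructor
      · by_contra hki
        have h1 : θ k ≤ θ i := hθ.monotone (not_lt.1 hki)
        have := Real.sin_nonpos_of_nonpos_of_neg_pi_le (x := θ k - θ i) (by linarith)
          (by linarith [hlo k, hhi j])
        linarith
      · by_contra hkj
        have h1 : θ j ≤ θ k := hθ.monotone (not_lt.1 hkj)
        have h2 : 0 ≤ Real.sin (θ k - θ i - Real.pi) :=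
          Real.sin_nonneg_of_nonneg_of_le_pi (by linarith) (by linarith [hlo i, hhi k])
        rw [Real.sin_sub_pi] at h2
        linarith
    have h1 := (hcount i).trans (Finset.card_le_card hsub)
    rw [Fin.card_Ioo] at h1
    omega
  · intro i j hij hN
    by_contra hcon
    have hlt : θ i < θ j := hθ (by rw [Fin.lt_def]; omega)
    have hpi : θ j - θ i ≤ Real.pi := by
      by_contra hp
      have h2 : 0 < Real.sin (θ j - θ i - Real.pi) :=
        Real.sin_pos_of_pos_of_lt_pi (by linarith) (by linarith [hlo i, hhi j])
      rw [Real.sin_sub_pi, ← Real.sin_neg, neg_sub] at h2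
      exact hcon h2
    have hsub : Finset.univ.filter (fun k => 0 < Real.sin (θ k - θ j)) ⊆ (Finset.Icc i j)ᶜ := by
      intro k hk
      simp only [Finset.mem_filter, Finset.mem_univ, true_and] at hk
      rw [Finset.mem_compl, Finset.mem_Icc]
      rintro ⟨h1, h2⟩
      have h1 := hθ.monotone h1
      have h2 := hθ.monotone h2
      have := Real.sin_nonpos_of_nonpos_of_neg_pi_le (x := θ k - θ j) (by linarith)
          (by linarith)
      linarith
    have h1 := (hcount j).trans (Finset.card_le_card hsub)
    rw [Finset.card_compl, Fin.card_Icc, Fintype.card_fin] at h1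
    omega

lemma birch {X : Finset E2} {N : ℕ} (hX : X.card = 3 * N) (hN : 0 < N) {O : E2}
    (hgen : ∀ p ∈ X, ∀ q ∈ X, p ≠ q → cr O p q ≠ 0)
    (hcount : ∀ p ∈ X, N ≤ (X.filter (fun q => 0 < cr O p q)).card) :
    ∃ T : Fin N → Finset E2, (∀ i, T i ⊆ X) ∧ (∀ i, Good O (T i)) ∧
      (∀ i j, i ≠ j → Disjoint (T i) (T j)) := by
  classical
  have hinj : Set.InjOn (ang O) X := by
    intro p hp q hq h
    by_contra hne
    obtain ⟨r, -, he⟩ := cr_ang O p q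
    rw [h] at he
    simp at he
    exact hgen p hp q hq hne he
  have hAc : (X.image (ang O)).card = 3 * N := by rw [Finset.card_image_of_injOn hinj, hX]
  set θ := (X.image (ang O)).orderEmbOfFin hAc with hθ
  have hx : ∀ k, ∃ x ∈ X, ang O x = θ k := fun k =>
    Finset.mem_image.1 (Finset.orderEmbOfFin_mem _ hAc k)
  choose x hxX hxθ using hx
  have xinj : Function.Injective x := by
    intro i j hij
    apply θ.injective
    rw [← hxθ, ← hxθ, hij]
  have hXim : Finset.univ.image x = X := by
    apply Finset.eq_of_subset_of_card_le
    · intro y hy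
      obtain ⟨k, -, rfl⟩ := Finset.mem_image.1 hy
      exact hxX k
    · rw [Finset.card_image_of_injective _ xinj, hX]; simp
  have hb := birch_angle θ θ.strictMono (fun i => by rw [← hxθ]; exact Complex.neg_pi_lt_arg _)
    (fun i => by rw [← hxθ]; exact Complex.arg_le_pi _) (by
      intro i
      refine (hcount (x i) (hxX i)).trans ?_
      rw [← Finset.card_image_of_injective _ xinj]
      apply Finset.card_le_card
      intro y hy
      obtain ⟨hyX, hy⟩ := Finset.mem_filter.1 hy
      rw [← hXim] at hyX
      obtain ⟨k, -, rfl⟩ := Finset.mem_image.1 hyX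
      refine Finset.mem_image_of_mem _ ?_
      simp only [Finset.mem_filter, Finset.mem_univ, true_and]
      rw [cr_pos_iff hy.ne', hxθ, hxθ] at hy
      exact hy)
  have hpos : ∀ i j, i ≠ j → 0 < Real.sin (θ j - θ i) → 0 < cr O (x i) (x j) := by
    intro i j hij h
    rw [cr_pos_iff (hgen _ (hxX i) _ (hxX j) (fun e => hij (xinj e))), hxθ, hxθ]
    exact h
  let f : Fin N → Fin 3 → Fin (3 * N) := fun i k => ⟨i.1 + k.1 * N, by
    have := i.2
    have := k.2
    have : k.1 * N ≤ 2 * N := Nat.mul_le_mul_right _ (by omega)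
    omega⟩
  refine ⟨fun i => {x (f i 0), x (f i 1), x (f i 2)}, ?_, ?_, ?_⟩
  · intro i y hy
    simp only [Finset.mem_insert, Finset.mem_singleton] at hy
    rcases hy with rfl | rfl | rfl <;> apply hxX
  · intro i
    have v0 : (f i 0).1 = i.1 := by simp [f]
    have v1 : (f i 1).1 = i.1 + N := by simp [f]
    have v2 : (f i 2).1 = i.1 + 2 * N := by simp [f]
    apply good_mk
    · exact hpos _ _ (fun e => by have := congrArg Fin.val e; omega) (hb.1 _ _ (by omega) hN)
    · exact hpos _ _ (fun e => by have := congrArg Fin.val e; omega) (hb.1 _ _ (by omega) hN)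
    · exact hpos _ _ (fun e => by have := congrArg Fin.val e; omega) (hb.2 _ _ (by omega) hN)
  · intro i j hij
    have hne : ∀ k l, x (f i k) ≠ x (f j l) := by
      intro k l e
      have e := congrArg Fin.val (xinj e)
      simp only [f] at e
      apply hij
      have e2 := congrArg (· % N) e
      simp only [Nat.add_mul_mod_self_right, Nat.mod_eq_of_lt i.2, Nat.mod_eq_of_lt j.2] at e2
      exact Fin.ext e2
    rw [Finset.disjoint_left]
    intro y hy hy'
    simp only [Finset.mem_insert, Finset.mem_singleton] at hy hy'
    rcases hy with rfl | rfl | rfl <;> rcases hy' with h | h | h <;> exact hne _ _ h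

open Classical in
/-- Number of points of `X` in the hull of `T`. -/
noncomputable def cnt (X T : Finset E2) : ℕ :=
  (X.filter (fun x => x ∈ convexHull ℝ (T : Set E2))).card

lemma cnt_lt {X S T : Finset E2} (hST : (S : Set E2) ⊆ convexHull ℝ (T : Set E2))
    (hT : AffineIndependent ℝ (fun p : T => (p : E2))) (hTX : T ⊆ X) {A : E2} (hA : A ∈ T)
    (hAS : A ∉ S) : cnt X S < cnt X T := by
  classical
  unfold cnt
  apply Finset.card_lt_card
  rw [Finset.ssubset_iff_of_subset]
  · refine ⟨A, ?_, ?_⟩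
    · simp only [Finset.mem_filter]
      exact ⟨hTX hA, subset_convexHull _ _ hA⟩
    · simp only [Finset.mem_filter, not_and]
      intro _
      exact vertex_notMem hT hA hST (by simpa using hAS)
  · intro y hy
    simp only [Finset.mem_filter] at hy ⊢
    exact ⟨hy.1, convexHull_min hST (convex_convexHull _ _) hy.2⟩

lemma ne_of_card_three {a b c : E2} (h : ({a, b, c} : Finset E2).card = 3) :
    a ≠ b ∧ a ≠ c ∧ b ≠ c := by
  refine ⟨?_, ?_, ?_⟩ <;> rintro rfl
  · have : ({a, a, c} : Finset E2) = {a, c} := by simp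
    have := Finset.card_le_two (a := a) (b := c)
    simp_all
  · have : ({a, b, a} : Finset E2) = {a, b} := by grind
    have := Finset.card_le_two (a := a) (b := b)
    simp_all
  · have : ({a, b, b} : Finset E2) = {a, b} := by simp
    have := Finset.card_le_two (a := a) (b := b)
    simp_all

/-- Admissible families. -/
def Fam (X : Finset E2) (O : E2) {N : ℕ} (T : Fin N → Finset E2) : Prop :=
  (∀ i, T i ⊆ X) ∧ (∀ i, Good O (T i)) ∧ (∀ i j, i ≠ j → Disjoint (T i) (T j))

lemma improve {X : Finset E2} (hgp : InGeneralPosition 2 (X : Set E2)) {N : ℕ} {O : E2}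
    (hgen : ∀ p ∈ X, ∀ q ∈ X, p ≠ q → cr O p q ≠ 0) {T : Fin N → Finset E2} (hT : Fam X O T)
    {i j : Fin N} (hij : i ≠ j)
    (hsub : convexHull ℝ (T j : Set E2) ⊆ convexHull ℝ (T i : Set E2)) :
    ∃ T' : Fin N → Finset E2, Fam X O T' ∧ ∑ k, 3 ^ cnt X (T' k) < ∑ k, 3 ^ cnt X (T k) := by
  classical
  obtain ⟨hTX, hG, hD⟩ := hT
  have hDij := hD i j hij
  obtain ⟨a, b, c, A, B, C, hi, hj, hG1, hG2⟩ := exists_swap (hG i) (hG j) (by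
    intro x hx y hy
    refine hgen x (hTX i hx) y (hTX j hy) ?_
    rintro rfl
    exact Finset.disjoint_left.1 hDij hx hy)
  have hai : AffineIndependent ℝ (fun p : T i => (p : E2)) :=
    hgp (T i) (by exact_mod_cast hTX i) (by rw [(hG i).card])
  have ci : ({a, b, c} : Finset E2).card = 3 := hi ▸ (hG i).card
  have cj : ({A, B, C} : Finset E2).card = 3 := hj ▸ (hG j).card
  have hsubU : ∀ x, x ∈ T i ∪ T j → x ∈ convexHull ℝ (T i : Set E2) := by
    intro x hx
    rcases Finset.mem_union.1 hx with h | h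
    · exact subset_convexHull _ _ h
    · exact hsub (subset_convexHull _ _ h)
  have hUX : T i ∪ T j ⊆ X := Finset.union_subset (hTX i) (hTX j)
  have u1 : ({A, b, c} : Finset E2) ⊆ T i ∪ T j := by rw [hi, hj]; grind
  have u2 : ({a, B, C} : Finset E2) ⊆ T i ∪ T j := by rw [hi, hj]; grind
  have hDij' : Disjoint ({a, b, c} : Finset E2) {A, B, C} := by rw [← hi, ← hj]; exact hDij
  have hd12 : Disjoint ({A, b, c} : Finset E2) {a, B, C} := by
    have n1 : a ≠ b ∧ a ≠ c ∧ b ≠ c := ne_of_card_three ci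
    have n2 : A ≠ B ∧ A ≠ C ∧ B ≠ C := ne_of_card_three cj
    simp only [Finset.disjoint_left, Finset.mem_insert, Finset.mem_singleton] at hDij' ⊢
    grind
  have l1 : cnt X {A, b, c} < cnt X (T i) := by
    refine cnt_lt (fun x hx => hsubU x (u1 hx)) hai (hTX i) (A := a) (by rw [hi]; simp) ?_
    exact fun h => Finset.disjoint_left.1 hd12 h (by simp)
  have l2 : cnt X {a, B, C} < cnt X (T i) := by
    refine cnt_lt (fun x hx => hsubU x (u2 hx)) hai (hTX i) (A := b) (by rw [hi]; simp) ?_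
    exact fun h => Finset.disjoint_left.1 hd12 (by simp) h
  let T' : Fin N → Finset E2 := fun k => if k = i then {A, b, c} else if k = j then {a, B, C}
    else T k
  have ti : T' i = {A, b, c} := by simp [T']
  have tj : T' j = {a, B, C} := by simp [T', hij.symm]
  have tk : ∀ k, k ≠ i → k ≠ j → T' k = T k := by intro k h1 h2; simp [T', h1, h2]
  refine ⟨T', ⟨?_, ?_, ?_⟩, ?_⟩
  · intro k
    by_cases h1 : k = i
    · rw [h1, ti]; exact u1.trans hUX
    by_cases h2 : k = j
    · rw [h2, tj]; exact u2.trans hUX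
    rw [tk k h1 h2]; exact hTX k
  · intro k
    by_cases h1 : k = i
    · rw [h1, ti]; exact hG1
    by_cases h2 : k = j
    · rw [h2, tj]; exact hG2
    rw [tk k h1 h2]; exact hG k
  · have hU : ∀ k, k ≠ i → k ≠ j → Disjoint (T i ∪ T j) (T k) := fun k h1 h2 =>
      Finset.disjoint_union_left.2 ⟨hD i k (Ne.symm h1), hD j k (Ne.symm h2)⟩
    intro k l hkl
    by_cases h1 : k = i
    · subst h1
      rw [ti]
      by_cases h2 : l = j
      · rw [h2, tj]; exact hd12
      · rw [tk l hkl.symm h2]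
        exact Finset.disjoint_of_subset_left u1 (hU l hkl.symm h2)
    by_cases h2 : k = j
    · subst h2
      rw [tj]
      by_cases h3 : l = i
      · rw [h3, ti]; exact hd12.symm
      · rw [tk l h3 hkl.symm]
        exact Finset.disjoint_of_subset_left u2 (hU l h3 hkl.symm)
    rw [tk k h1 h2]
    by_cases h3 : l = i
    · rw [h3, ti]
      exact (Finset.disjoint_of_subset_left u1 (hU k h1 h2)).symm
    by_cases h4 : l = j
    · rw [h4, tj]
      exact (Finset.disjoint_of_subset_left u2 (hU k h1 h2)).symm
    rw [tk l h3 h4]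
    exact hD k l hkl
  · have hji : j ∈ Finset.univ.erase i := by simp [hij.symm]
    rw [← Finset.add_sum_erase _ _ (Finset.mem_univ i), ← Finset.add_sum_erase _ _ hji,
      ← Finset.add_sum_erase Finset.univ (fun k => 3 ^ cnt X (T k)) (Finset.mem_univ i),
      ← Finset.add_sum_erase _ (fun k => 3 ^ cnt X (T k)) hji, ti, tj]
    have he : ∑ k ∈ (Finset.univ.erase i).erase j, 3 ^ cnt X (T' k) =
        ∑ k ∈ (Finset.univ.erase i).erase j, 3 ^ cnt X (T k) := by
      refine Finset.sum_congr rfl fun k hk => ?_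
      simp only [Finset.mem_erase, Finset.mem_univ, and_true] at hk
      rw [tk k hk.2 hk.1]
    rw [he]
    have p1 : 3 ^ (cnt X {A, b, c} + 1) ≤ 3 ^ cnt X (T i) := Nat.pow_le_pow_right (by norm_num) l1
    have p2 : 3 ^ (cnt X {a, B, C} + 1) ≤ 3 ^ cnt X (T i) := Nat.pow_le_pow_right (by norm_num) l2
    have p3 : 0 < 3 ^ cnt X (T i) := by positivity
    have p4 : 0 < 3 ^ cnt X (T j) := by positivity
    rw [pow_succ] at p1 p2
    omega

end CrossTri

/-- Every set of `n` points in general position in the plane spans `⌊n/3⌋`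
vertex-disjoint triangles that are pairwise crossing, i.e. the topological
boundaries of their convex hulls pairwise intersect. -/
theorem pairwise_crossing_triangles (n : ℕ)
    (X : Finset (EuclideanSpace ℝ (Fin 2))) (hcard : X.card = n)
    (hgp : InGeneralPosition 2 (↑X : Set (EuclideanSpace ℝ (Fin 2)))) :
    ∃ T : Fin (n / 3) → Finset (EuclideanSpace ℝ (Fin 2)),
      (∀ i, T i ⊆ X) ∧
      (∀ i, (T i).card = 3) ∧
      (∀ i j, i ≠ j → Disjoint (T i) (T j)) ∧
      (∀ i j, i ≠ j →
        (frontier (convexHull ℝ (↑(T i) : Set (EuclideanSpace ℝ (Fin 2)))) ∩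
          frontier (convexHull ℝ (↑(T j) : Set (EuclideanSpace ℝ (Fin 2))))).Nonempty) := by
  classical
  rcases Nat.eq_zero_or_pos (n / 3) with h0 | hN
  · rw [h0]
    exact ⟨fun _ => ∅, fun i => i.elim0, fun i => i.elim0, fun i => i.elim0, fun i => i.elim0⟩
  obtain ⟨Y, hYX, hY⟩ := Finset.exists_subset_card_eq (s := X) (n := 3 * (n / 3)) (by omega)
  have hgpY : InGeneralPosition 2 (Y : Set (EuclideanSpace ℝ (Fin 2))) := fun s hs hc =>
    hgp s (hs.trans (by exact_mod_cast hYX)) hc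
  obtain ⟨O, hgen, hcount⟩ := CrossTri.exists_center hgpY hY hN
  obtain ⟨T₀, hT₀⟩ := CrossTri.birch hY hN hgen hcount
  obtain ⟨T, hT, hmin⟩ := WellFounded.has_min
    (measure (fun T : Fin (n / 3) → Finset (EuclideanSpace ℝ (Fin 2)) =>
      ∑ k, 3 ^ CrossTri.cnt Y (T k))).wf {T | CrossTri.Fam Y O T} ⟨T₀, hT₀⟩
  have hT' := hT
  obtain ⟨hTY, hG, hD⟩ := hT'
  refine ⟨T, fun i => (hTY i).trans hYX, fun i => (hG i).card, hD, ?_⟩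
  intro i j hij
  by_contra hne
  rw [Set.not_nonempty_iff_eq_empty] at hne
  rcases CrossTri.nested (convex_convexHull ℝ _) (convex_convexHull ℝ _)
    ((T i).finite_toSet.isCompact_convexHull ℝ) ((T j).finite_toSet.isCompact_convexHull ℝ)
    (hG i).mem_interior (hG j).mem_interior hne with h | h
  · obtain ⟨T', h1, h2⟩ := CrossTri.improve hgpY hgen hT hij.symm h
    exact hmin T' h1 h2
  · obtain ⟨T', h1, h2⟩ := CrossTri.improve hgpY hgen hT hij h
    exact hmin T' h1 h2
end

section
/- Let d ≥ 2. For every finite set X of n points in ℝ^d in general position, there exist ⌊n/(d+1)⌋ pairwise disjoint (d+1)-element subsets of X such that the simplices they span (their convex hulls) are pairwise crossing, i.e., for any two of these simplices the topological boundaries of their convex hulls have nonempty intersection. -/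
/-- Combinatorial parity lemma. -/
theorem cts_parity {ι : Type*} [Fintype ι] [DecidableEq ι] (d : ℕ) (hd : 1 ≤ d)
    (hι : Fintype.card ι = 2 * (d + 1)) (P : Finset ι → Prop)
    (hP : ∀ W : Finset ι, W.card = d + 2 → ¬ (∃! w, w ∈ W ∧ P (W.erase w)) ∧
      ∀ a b c, a ∈ W → b ∈ W → c ∈ W → P (W.erase a) → P (W.erase b) → P (W.erase c) →
        a = b ∨ a = c ∨ b = c)
    (A : Finset ι) (hA : A.card = d + 1) (hPA : P A) (hPA' : P Aᶜ) :
    ∃ S : Finset ι, S.card = d + 1 ∧ P S ∧ P Sᶜ ∧ S ≠ A ∧ S ≠ Aᶜ := by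
  classical
  obtain ⟨v, hv⟩ : A.Nonempty := Finset.card_pos.1 (by omega)
  have heven : ∀ W : Finset ι, W.card = d + 2 →
      (∑ w ∈ W, (if P (W.erase w) then (1 : ZMod 2) else 0)) = 0 := by
    intro W hW
    obtain ⟨h1, h2⟩ := hP W hW
    rw [Finset.sum_boole]
    set F := W.filter (fun w => P (W.erase w)) with hF
    have hle : F.card ≤ 2 := by
      by_contra hcon
      push Not at hcon
      obtain ⟨a, b, c, ha, hb, hc, hab, hac, hbc⟩ := Finset.two_lt_card_iff.1 hcon
      simp only [hF, Finset.mem_filter] at ha hb hc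
      rcases h2 a b c ha.1 hb.1 hc.1 ha.2 hb.2 hc.2 with h | h | h <;> contradiction
    have hne : F.card ≠ 1 := by
      intro h
      obtain ⟨a, ha⟩ := Finset.card_eq_one.1 h
      apply h1
      have : ∀ w, (w ∈ W ∧ P (W.erase w)) ↔ w = a := by
        intro w
        rw [← Finset.mem_singleton, ← ha, hF, Finset.mem_filter]
      exact ⟨a, (this a).2 rfl, fun y hy => (this y).1 hy⟩
    have : F.card = 0 ∨ F.card = 2 := by omega
    rcases this with h | h
    · rw [h]; rfl
    · rw [h]; rfl
  set Q := (Finset.powersetCard (d + 1) (Finset.univ : Finset ι)).filter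
    (fun S => v ∈ S ∧ P S) with hQ
  have hQm : ∀ S, S ∈ Q ↔ S.card = d + 1 ∧ v ∈ S ∧ P S := by
    intro S; simp [hQ, Finset.mem_powersetCard]
  have key : (∑ S ∈ Q, (if P Sᶜ then (1 : ZMod 2) else 0)) = 0 := by
    have h1 : ∀ S ∈ Q, (if P Sᶜ then (1 : ZMod 2) else 0) =
        ∑ w ∈ Sᶜ, (if P (insert v (Sᶜ.erase w)) then (1 : ZMod 2) else 0) := by
      intro S hS
      obtain ⟨hc, hvS, hPS⟩ := (hQm S).1 hS
      have hv' : v ∉ Sᶜ := by simpa using hvS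
      have hcc : Sᶜ.card = d + 1 := by rw [Finset.card_compl, hc, hι]; omega
      have := heven (insert v Sᶜ) (by rw [Finset.card_insert_of_notMem hv', hcc])
      rw [Finset.sum_insert hv', Finset.erase_insert hv'] at this
      have h2 : ∀ w ∈ Sᶜ, (if P ((insert v Sᶜ).erase w) then (1 : ZMod 2) else 0) =
          (if P (insert v (Sᶜ.erase w)) then (1 : ZMod 2) else 0) := by
        intro w hw
        rw [Finset.erase_insert_of_ne (by rintro rfl; exact hv' hw)]
      rw [Finset.sum_congr rfl h2] at this
      rw [eq_neg_of_add_eq_zero_left this, ZMod.neg_eq_self_mod_two]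
    rw [Finset.sum_congr rfl h1, Finset.sum_sigma']
    rw [← Finset.sum_filter]
    refine Finset.sum_involution
      (fun x _ => (⟨insert v (x.1ᶜ.erase x.2), x.2⟩ : (_ : Finset ι) × ι)) ?_ ?_ ?_ ?_
    · intros; rfl
    · rintro ⟨S, w⟩ hSw _ heq
      simp only [Finset.mem_filter, Finset.mem_sigma, hQm] at hSw
      obtain ⟨⟨⟨hc, hvS, hPS⟩, hw⟩, hP2⟩ := hSw
      have h1 : insert v (Sᶜ.erase w) = S := congrArg Sigma.fst heq
      have : 1 < S.card := by omega
      obtain ⟨x, hxS, hxv⟩ := Finset.exists_mem_ne this v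
      have hx := hxS
      rw [← h1] at hx
      simp [hxv, hxS] at hx
    · rintro ⟨S, w⟩ hSw
      simp only [Finset.mem_filter, Finset.mem_sigma, hQm] at hSw ⊢
      obtain ⟨⟨⟨hc, hvS, hPS⟩, hw⟩, hP2⟩ := hSw
      have hwS : w ∉ S := by simpa using hw
      have hvw : v ≠ w := by rintro rfl; exact hwS hvS
      have hback : insert v ((insert v (Sᶜ.erase w))ᶜ.erase w) = S := by
        ext x
        simp only [Finset.mem_insert, Finset.mem_erase, Finset.mem_compl]
        by_cases h1 : x = v
        · subst h1; simp [hvS]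
        · by_cases h2 : x = w
          · subst h2; simp [h1, hwS]
          · simp [h1, h2]
      refine ⟨⟨⟨?_, by simp, hP2⟩, ?_⟩, ?_⟩
      · rw [Finset.card_insert_of_notMem (by simp [hvS]), Finset.card_erase_of_mem hw,
          Finset.card_compl, hc, hι]; omega
      · simp [hvw.symm]
      · rw [hback]; exact hPS
    · rintro ⟨S, w⟩ hSw
      simp only [Finset.mem_filter, Finset.mem_sigma, hQm] at hSw ⊢
      obtain ⟨⟨⟨hc, hvS, hPS⟩, hw⟩, hP2⟩ := hSw
      have hwS : w ∉ S := by simpa using hw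
      have hback : insert v ((insert v (Sᶜ.erase w))ᶜ.erase w) = S := by
        ext x
        simp only [Finset.mem_insert, Finset.mem_erase, Finset.mem_compl]
        by_cases h1 : x = v
        · subst h1; simp [hvS]
        · by_cases h2 : x = w
          · subst h2; simp [h1, hwS]
          · simp [h1, h2]
      rw [hback]
  rw [← Finset.sum_filter] at key
  by_contra hcon
  push Not at hcon
  have hsing : Q.filter (fun S => P Sᶜ) = {A} := by
    ext S
    simp only [Finset.mem_filter, hQm, Finset.mem_singleton]
    constructor
    · rintro ⟨⟨h1, h2, h3⟩, h4⟩
      by_contra hne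
      have := hcon S h1 h3 h4 hne
      rw [this] at h2
      exact (Finset.mem_compl.1 h2) hv
    · rintro rfl
      exact ⟨⟨hA, hv, hPA⟩, hPA'⟩
  rw [hsing] at key
  simp at key

/-- `p` is a convex combination of the points `v i`, `i ∈ S`. -/
def CtsIn {ι E : Type*} [Fintype ι] [AddCommGroup E] [Module ℝ E]
    (v : ι → E) (p : E) (S : Finset ι) (l : ι → ℝ) : Prop :=
  (∀ i, 0 ≤ l i) ∧ (∀ i, i ∉ S → l i = 0) ∧ ∑ i, l i = 1 ∧ ∑ i, l i • v i = p

theorem cts_move {ι E : Type*} [Fintype ι] [DecidableEq ι] [AddCommGroup E] [Module ℝ E]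
    (v : ι → E) (p : E) (S : Finset ι) (l g : ι → ℝ) (hl : CtsIn v p S l)
    (hg0 : g ≠ 0) (hgS : ∀ i, i ∉ S → g i = 0) (hg1 : ∑ i, g i = 0)
    (hg2 : ∑ i, g i • v i = 0) :
    ∃ i ∈ S, g i < 0 ∧ ∃ m, CtsIn v p (S.erase i) m := by
  obtain ⟨h0, hS, h1, h2⟩ := hl
  have hne : (Finset.univ.filter (fun i => g i < 0)).Nonempty := by
    by_contra hcon
    rw [Finset.not_nonempty_iff_eq_empty, Finset.filter_eq_empty_iff] at hcon
    apply hg0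
    have := (Finset.sum_eq_zero_iff_of_nonneg (s := Finset.univ) (f := g)
      (fun i hi => not_lt.1 (hcon hi))).1 hg1
    funext i
    exact this i (Finset.mem_univ i)
  obtain ⟨i, hi, hmin⟩ := Finset.exists_min_image _ (fun i => l i / (- g i)) hne
  have hi' : g i < 0 := (Finset.mem_filter.1 hi).2
  have hiS : i ∈ S := by
    by_contra h
    rw [hgS i h] at hi'
    exact lt_irrefl _ hi'
  have ht : 0 ≤ l i / (- g i) := div_nonneg (h0 i) (by linarith)
  refine ⟨i, hiS, hi', fun j => l j + (l i / (- g i)) * g j, ?_, ?_, ?_, ?_⟩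
  · intro j
    dsimp only
    by_cases hj : g j < 0
    · have := hmin j (Finset.mem_filter.2 ⟨Finset.mem_univ j, hj⟩)
      rw [le_div_iff₀ (by linarith)] at this
      linarith
    · have := mul_nonneg ht (not_lt.1 hj)
      have := h0 j
      linarith
  · intro j hj
    by_cases hji : j = i
    · subst hji
      have := hi'.ne
      dsimp only
      field_simp
      ring
    · have : j ∉ S := fun h => hj (Finset.mem_erase.2 ⟨hji, h⟩)
      simp [hS j this, hgS j this]
  · rw [Finset.sum_add_distrib, ← Finset.mul_sum, hg1, h1]; simp
  · simp only [add_smul, mul_smul]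
    rw [Finset.sum_add_distrib, ← Finset.smul_sum, hg2, h2]; simp

theorem cts_pos {ι E : Type*} [Fintype ι] [DecidableEq ι] [AddCommGroup E] [Module ℝ E]
    (d : ℕ) (v : ι → E) (p : E)
    (hgen : ∀ S : Finset ι, S.card ≤ d → ∀ l, ¬ CtsIn v p S l)
    (S : Finset ι) (hS : S.card = d + 1) (l : ι → ℝ) (hl : CtsIn v p S l) :
    ∀ i ∈ S, 0 < l i := by
  intro i hi
  refine lt_of_le_of_ne (hl.1 i) fun h => ?_
  refine hgen (S.erase i) (by rw [Finset.card_erase_of_mem hi]; omega) l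
    ⟨hl.1, fun j hj => ?_, hl.2.2⟩
  by_cases hji : j = i
  · rw [hji, ← h]
  · exact hl.2.1 j fun h => hj (Finset.mem_erase.2 ⟨hji, h⟩)

theorem cts_rigid {ι E : Type*} [Fintype ι] [DecidableEq ι] [AddCommGroup E] [Module ℝ E]
    (d : ℕ) (v : ι → E) (p : E)
    (hgen : ∀ S : Finset ι, S.card ≤ d → ∀ l, ¬ CtsIn v p S l)
    (S : Finset ι) (hS : S.card = d + 1) (l : ι → ℝ) (hl : CtsIn v p S l) (g : ι → ℝ)
    (hgS : ∀ i, i ∉ S → g i = 0) (hg1 : ∑ i, g i = 0)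
    (hg2 : ∑ i, g i • v i = 0) : g = 0 := by
  by_contra hg0
  obtain ⟨i, hi, -, m, hm⟩ := cts_move v p S l g hl hg0 hgS hg1 hg2
  exact hgen _ (by rw [Finset.card_erase_of_mem hi]; omega) m hm

theorem cts_two {ι E : Type*} [Fintype ι] [DecidableEq ι] [AddCommGroup E] [Module ℝ E]
    [FiniteDimensional ℝ E]
    (d : ℕ) (hE : Module.finrank ℝ E = d) (v : ι → E) (p : E)
    (hgen : ∀ S : Finset ι, S.card ≤ d → ∀ l, ¬ CtsIn v p S l)
    (W : Finset ι) (hW : W.card = d + 2) :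
    ¬ (∃! w, w ∈ W ∧ ∃ l, CtsIn v p (W.erase w) l) := by
  rintro ⟨w, ⟨hw, l, hl⟩, huniq⟩
  have hce : (W.erase w).card = d + 1 := by rw [Finset.card_erase_of_mem hw]; omega
  obtain ⟨g, hgW, hg0, hg1, hg2⟩ : ∃ g : ι → ℝ, (∀ i, i ∉ W → g i = 0) ∧ g ≠ 0 ∧
      ∑ i, g i = 0 ∧ ∑ i, g i • v i = 0 := by
    let f : (W → ℝ) →ₗ[ℝ] (E × ℝ) :=
      { toFun := fun c => (∑ i, c i • v i, ∑ i, c i)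
        map_add' := by intro a b; simp [add_smul, Finset.sum_add_distrib]
        map_smul' := by intro a b; simp [mul_smul, Finset.smul_sum, Finset.mul_sum] }
    have hker : LinearMap.ker f ≠ ⊥ := by
      apply LinearMap.ker_ne_bot_of_finrank_lt
      simp [hE, hW]
    obtain ⟨c, hc, hc0⟩ := Submodule.exists_mem_ne_zero_of_ne_bot hker
    have hfc : (∑ i : W, c i • v i, ∑ i : W, c i) = ((0 : E), (0 : ℝ)) := hc
    rw [Prod.mk.injEq] at hfc
    refine ⟨fun i => if h : i ∈ W then c ⟨i, h⟩ else 0, ?_, ?_, ?_, ?_⟩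
    · intro i hi; simp [hi]
    · intro h
      apply hc0
      funext i
      have := congrFun h i.1
      simpa using this
    · refine Eq.trans ?_ hfc.2
      rw [← Finset.sum_subset (Finset.subset_univ W) (by intro i _ hi; simp [hi]),
        ← Finset.sum_attach W]
      simp
    · refine Eq.trans ?_ hfc.1
      rw [← Finset.sum_subset (Finset.subset_univ W) (by intro i _ hi; simp [hi]),
        ← Finset.sum_attach W]
      simp
  have hgw : g w ≠ 0 := by
    intro h
    refine hg0 (cts_rigid d v p hgen _ hce l hl g ?_ hg1 hg2)
    intro i hi
    by_cases hiw : i = w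
    · rw [hiw, h]
    · exact hgW i fun h => hi (Finset.mem_erase.2 ⟨hiw, h⟩)
  have hlW : CtsIn v p W l := ⟨hl.1, fun i hi => hl.2.1 i fun h => hi (Finset.mem_of_mem_erase h),
    hl.2.2⟩
  rcases lt_or_gt_of_ne hgw with h | h
  · obtain ⟨i, hi, hneg, m, hm⟩ := cts_move v p W l (fun i => - g i) hlW
      (fun h => hg0 (by funext i; simpa using congrFun h i)) (fun i hi => by simp [hgW i hi])
      (by simp [hg1]) (by simp [hg2])
    have := huniq i ⟨hi, m, hm⟩
    subst this
    linarith
  · obtain ⟨i, hi, hneg, m, hm⟩ := cts_move v p W l g hlW hg0 hgW hg1 hg2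
    have := huniq i ⟨hi, m, hm⟩
    subst this
    linarith

theorem cts_three {ι E : Type*} [Fintype ι] [DecidableEq ι] [AddCommGroup E] [Module ℝ E]
    (d : ℕ) (v : ι → E) (p : E)
    (hgen : ∀ S : Finset ι, S.card ≤ d → ∀ l, ¬ CtsIn v p S l)
    (W : Finset ι) (hW : W.card = d + 2) (a b c : ι) (ha : a ∈ W) (hb : b ∈ W) (hc : c ∈ W)
    (hPa : ∃ l, CtsIn v p (W.erase a) l) (hPb : ∃ l, CtsIn v p (W.erase b) l)
    (hPc : ∃ l, CtsIn v p (W.erase c) l) : a = b ∨ a = c ∨ b = c := by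
  by_contra hcon
  push Not at hcon
  obtain ⟨hab, hac, hbc⟩ := hcon
  obtain ⟨x, hx⟩ := hPa
  obtain ⟨y, hy⟩ := hPb
  obtain ⟨z, hz⟩ := hPc
  have hpos : ∀ w ∈ W, ∀ l, CtsIn v p (W.erase w) l → ∀ i ∈ W, i ≠ w → 0 < l i :=
    fun w hw l hl i hi hiw => cts_pos d v p hgen _
      (by rw [Finset.card_erase_of_mem hw]; omega) l hl i (Finset.mem_erase.2 ⟨hiw, hi⟩)
  have xa : x a = 0 := hx.2.1 a (by simp)
  have yb : y b = 0 := hy.2.1 b (by simp)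
  have zc : z c = 0 := hz.2.1 c (by simp)
  have xb := hpos a ha x hx b hb hab.symm
  have xc := hpos a ha x hx c hc hac.symm
  have ya := hpos b hb y hy a ha hab
  have yc := hpos b hb y hy c hc hbc.symm
  have za := hpos c hc z hz a ha hac
  have zb := hpos c hc z hz b hb hbc
  have key := cts_rigid d v p hgen (W.erase a)
    (by rw [Finset.card_erase_of_mem ha]; omega) x hx
    (fun i => z a * (y i - x i) - y a * (z i - x i)) ?_ ?_ ?_
  · have kb := congrFun key b
    have kc := congrFun key c
    simp only [Pi.zero_apply] at kb kc
    rw [yb] at kb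
    rw [zc] at kc
    have h1 : z a < y a := by
      nlinarith [mul_pos za xb, mul_pos ya zb]
    nlinarith [mul_pos za yc, mul_pos (sub_pos.2 h1) xc]
  · intro i hi
    by_cases hia : i = a
    · subst hia
      simp only [xa]; ring
    · have hiW : i ∉ W := fun h => hi (Finset.mem_erase.2 ⟨hia, h⟩)
      rw [hx.2.1 i hi, hy.2.1 i (fun h => hiW (Finset.mem_of_mem_erase h)),
        hz.2.1 i (fun h => hiW (Finset.mem_of_mem_erase h))]
      ring
  · simp only [Finset.sum_sub_distrib, ← Finset.mul_sum, hx.2.2.1, hy.2.2.1, hz.2.2.1]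
    ring
  · simp only [sub_smul, mul_smul, Finset.sum_sub_distrib, ← Finset.smul_sum, hx.2.2.2,
      hy.2.2.2, hz.2.2.2]
    simp

theorem cts_nested {E : Type*} [NormedAddCommGroup E] [NormedSpace ℝ E]
    [Nontrivial E] (hrk : 1 < Module.rank ℝ E) (K L : Set E)
    (hKc : Convex ℝ K) (hLc : Convex ℝ L) (hK : IsCompact K) (hL : IsCompact L)
    (hKi : (interior K).Nonempty) (hKL : (K ∩ L).Nonempty)
    (hfr : frontier K ∩ frontier L = ∅) : K ⊆ L ∨ L ⊆ K := by
  have hconn : ∀ K : Set E, Convex ℝ K → IsCompact K → (interior K).Nonempty →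
      IsPreconnected (frontier K) := by
    intro K hKc hK hKi
    obtain ⟨e, -, -, he⟩ := exists_homeomorph_image_interior_closure_frontier_eq_unitBall hKc hKi
      hK.isBounded
    have h : IsPreconnected (e '' frontier K) := by
      rw [he]; exact isPreconnected_sphere hrk 0 1
    exact e.isPreconnected_image.1 h
  -- if frontier K ⊆ L then K ⊆ L
  have hsub : ∀ K L : Set E, Convex ℝ K → Convex ℝ L → IsCompact K → IsClosed L →
      frontier K ⊆ L → K ⊆ L := by
    intro K L hKc hLc hK hL hf
    rw [← closure_convexHull_extremePoints hK hKc]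
    refine closure_minimal (convexHull_min (fun x hx => hf ?_) hLc) hL
    rw [hK.isClosed.frontier_eq]
    exact ⟨extremePoints_subset hx,
      fun h => Set.disjoint_left.1 (_root_.disjoint_interior_extremePoints K) h hx⟩
  have hsep : ∀ K L : Set E, IsPreconnected (frontier K) → IsClosed L →
      frontier K ∩ frontier L = ∅ → frontier K ⊆ interior L ∨ frontier K ⊆ Lᶜ := by
    intro K L hK hL h
    apply hK.subset_or_subset isOpen_interior hL.isOpen_compl
    · exact disjoint_compl_right.mono_left interior_subset
    · intro x hx
      by_cases hxL : x ∈ L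
      · left
        by_contra hxi
        have : x ∈ frontier K ∩ frontier L := ⟨hx, by rw [hL.frontier_eq]; exact ⟨hxL, hxi⟩⟩
        rw [h] at this
        exact this
      · exact Or.inr hxL
  rcases hsep K L (hconn K hKc hK hKi) hL.isClosed hfr with h | h
  · exact Or.inl (hsub K L hKc hLc hK hL.isClosed (h.trans interior_subset))
  · right
    obtain ⟨x, hxK, hxL⟩ := hKL
    have : L ⊆ interior K ∨ L ⊆ Kᶜ := by
      apply hLc.isPreconnected.subset_or_subset isOpen_interior hK.isClosed.isOpen_compl
      · exact disjoint_compl_right.mono_left interior_subset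
      · intro y hy
        by_cases hyK : y ∈ K
        · left
          by_contra hyi
          exact h (show y ∈ frontier K by rw [hK.isClosed.frontier_eq]; exact ⟨hyK, hyi⟩) hy
        · exact Or.inr hyK
    rcases this with h | h
    · exact h.trans interior_subset
    · exact absurd hxK (h hxL)

theorem cts_interior {d : ℕ} (A : Finset (EuclideanSpace ℝ (Fin d))) (hA : A.card = d + 1)
    (hind : AffineIndependent ℝ (fun p : A => (p : EuclideanSpace ℝ (Fin d)))) :
    (interior (convexHull ℝ (A : Set (EuclideanSpace ℝ (Fin d))))).Nonempty := by
  rw [interior_convexHull_nonempty_iff_affineSpan_eq_top]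
  have := (hind.affineSpan_eq_top_iff_card_eq_finrank_add_one).2 (by simp [hA])
  simpa using this

theorem cts_drop {d : ℕ} (B : Finset (EuclideanSpace ℝ (Fin d)))
    (hind : AffineIndependent ℝ (fun p : B => (p : EuclideanSpace ℝ (Fin d))))
    (b : EuclideanSpace ℝ (Fin d)) (hb : b ∈ B) (T : Set (EuclideanSpace ℝ (Fin d)))
    (hT : T ⊆ convexHull ℝ (B : Set (EuclideanSpace ℝ (Fin d)))) (hbT : b ∉ T) :
    b ∉ convexHull ℝ T := by
  have h1 : b ∈ (convexHull ℝ (B : Set (EuclideanSpace ℝ (Fin d)))).extremePoints ℝ := by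
    by_contra hcon
    have hcomp : IsCompact (convexHull ℝ (B : Set (EuclideanSpace ℝ (Fin d)))) :=
      B.finite_toSet.isCompact_convexHull (𝕜 := ℝ)
    have hkm := closure_convexHull_extremePoints hcomp (convex_convexHull ℝ _)
    have hsub : (convexHull ℝ (B : Set (EuclideanSpace ℝ (Fin d)))).extremePoints ℝ ⊆
        (B : Set (EuclideanSpace ℝ (Fin d))) \ {b} := fun x hx =>
      ⟨extremePoints_convexHull_subset hx, fun h => hcon (h ▸ hx)⟩
    have hcl : IsClosed (convexHull ℝ ((B : Set (EuclideanSpace ℝ (Fin d))) \ {b})) :=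
      ((B.finite_toSet.sdiff).isCompact_convexHull (𝕜 := ℝ)).isClosed
    have hbm : b ∈ convexHull ℝ ((B : Set (EuclideanSpace ℝ (Fin d))) \ {b}) := by
      have h0 : b ∈ convexHull ℝ (B : Set (EuclideanSpace ℝ (Fin d))) :=
        subset_convexHull ℝ _ hb
      rw [← hkm] at h0
      exact closure_minimal (convexHull_mono hsub) hcl h0
    have h3 := hind.notMem_affineSpan_sdiff ⟨b, hb⟩ Set.univ
    apply h3
    have h4 : ((fun p : B => (p : EuclideanSpace ℝ (Fin d))) '' (Set.univ \ {⟨b, hb⟩})) =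
        (B : Set (EuclideanSpace ℝ (Fin d))) \ {b} := by
      ext x
      simp only [Set.mem_image, Set.mem_sdiff, Set.mem_univ, Set.mem_singleton_iff, true_and,
        Finset.mem_coe]
      constructor
      · rintro ⟨y, hy, rfl⟩
        exact ⟨y.2, fun h => hy (Subtype.ext h)⟩
      · rintro ⟨hx, hxb⟩
        exact ⟨⟨x, hx⟩, fun h => hxb (congrArg Subtype.val h), rfl⟩
    rw [h4]
    exact convexHull_subset_affineSpan _ hbm
  rw [(convex_convexHull ℝ _).mem_extremePoints_iff_convex_sdiff] at h1
  have h2 : convexHull ℝ T ⊆ convexHull ℝ (B : Set (EuclideanSpace ℝ (Fin d))) \ {b} :=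
    convexHull_min (fun x hx => ⟨hT hx, fun h => hbT (h ▸ hx)⟩) h1.2
  exact fun h => (h2 h).2 rfl

theorem cts_generic {ι : Type*} [Fintype ι] [DecidableEq ι] {d : ℕ}
    (v : ι → EuclideanSpace ℝ (Fin d))
    (U : Set (EuclideanSpace ℝ (Fin d))) (hU : IsOpen U) (hne : U.Nonempty) :
    ∃ p ∈ U, ∀ S : Finset ι, S.card ≤ d → p ∉ affineSpan ℝ (v '' S) := by
  by_contra hcon
  push Not at hcon
  have hsub : U ⊆ ⋃ S ∈ {S : Finset ι | S.card ≤ d},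
      (affineSpan ℝ (v '' S) : Set (EuclideanSpace ℝ (Fin d))) := by
    intro p hp
    obtain ⟨S, hS, hpS⟩ := hcon p hp
    simp only [Set.mem_iUnion]
    exact ⟨S, hS, hpS⟩
  have hpos := hU.measure_pos MeasureTheory.volume hne
  have hz : MeasureTheory.volume (⋃ S ∈ {S : Finset ι | S.card ≤ d},
      (affineSpan ℝ (v '' S) : Set (EuclideanSpace ℝ (Fin d)))) = 0 := by
    rw [MeasureTheory.measure_biUnion_null_iff (Set.to_countable _)]
    intro S hS
    apply MeasureTheory.Measure.addHaar_affineSubspace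
    intro htop
    have hS' : S.card ≤ d := hS
    rcases S.eq_empty_or_nonempty with rfl | hSne
    · simp at htop
    · have hcp := hSne.card_pos
      have h1 := finrank_vectorSpan_image_finset_le ℝ v S (n := S.card - 1) (by omega)
      rw [Finset.coe_image, ← direction_affineSpan, htop, AffineSubspace.direction_top,
        finrank_top, finrank_euclideanSpace_fin] at h1
      omega
  exact absurd (MeasureTheory.measure_mono_null hsub hz) hpos.ne'

theorem cts_in_iff {ι E : Type*} [Fintype ι] [AddCommGroup E] [Module ℝ E]
    (v : ι → E) (p : E) (S : Finset ι) :
    (∃ l, CtsIn v p S l) ↔ p ∈ convexHull ℝ (v '' S) := by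
  classical
  constructor
  · rintro ⟨l, h0, hS, h1, rfl⟩
    have h2 : ∑ i, l i • v i = ∑ i ∈ S, l i • v i :=
      (Finset.sum_subset (Finset.subset_univ S) (fun i _ hi => by simp [hS i hi])).symm
    have h3 : ∑ i ∈ S, l i = 1 := by
      rw [← h1]
      exact Finset.sum_subset (Finset.subset_univ S) (fun i _ hi => hS i hi)
    rw [h2]
    exact (convex_convexHull ℝ _).sum_mem (fun i _ => h0 i) h3
      (fun i hi => subset_convexHull ℝ _ ⟨i, hi, rfl⟩)
  · intro hp
    have hconv : Convex ℝ {q | ∃ l, CtsIn v q S l} := by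
      rintro x ⟨l, h0, hS, h1, rfl⟩ y ⟨m, k0, kS, k1, rfl⟩ a b ha hb hab
      refine ⟨fun i => a * l i + b * m i, ?_, ?_, ?_, ?_⟩
      · intro i
        have := mul_nonneg ha (h0 i)
        have := mul_nonneg hb (k0 i)
        dsimp only
        linarith
      · intro i hi
        simp [hS i hi, kS i hi]
      · rw [Finset.sum_add_distrib, ← Finset.mul_sum, ← Finset.mul_sum, h1, k1]
        simpa using hab
      · simp only [add_smul, mul_smul, Finset.sum_add_distrib, ← Finset.smul_sum]
    refine convexHull_min ?_ hconv hp
    rintro _ ⟨i, hi, rfl⟩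
    refine ⟨fun j => if j = i then 1 else 0, ?_, ?_, ?_, ?_⟩
    · intro j; dsimp only; split_ifs <;> norm_num
    · intro j hj
      have : j ≠ i := by rintro rfl; exact hj hi
      simp [this]
    · simp
    · simp

theorem cts_perturb {ι : Type*} [Fintype ι] [DecidableEq ι] {d : ℕ} (hd : 1 ≤ d)
    (hι : Fintype.card ι = 2 * (d + 1)) (v : ι → EuclideanSpace ℝ (Fin d))
    (p : EuclideanSpace ℝ (Fin d)) (A : Finset ι) (hA : A.card = d + 1)
    (hAi : (interior (convexHull ℝ (v '' A))).Nonempty)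
    (hBi : (interior (convexHull ℝ (v '' (Aᶜ : Finset ι)))).Nonempty)
    (hpA : p ∈ convexHull ℝ (v '' A)) (hpB : p ∈ convexHull ℝ (v '' (Aᶜ : Finset ι)))
    (ε : ℝ) (hε : 0 < ε) :
    ∃ S : Finset ι, S.card = d + 1 ∧ S ≠ A ∧ S ≠ Aᶜ ∧
      (∃ q ∈ convexHull ℝ (v '' S), dist q p < 2 * ε) ∧
      (∃ q ∈ convexHull ℝ (v '' (Sᶜ : Finset ι)), dist q p < 2 * ε) := by
  obtain ⟨a, ha⟩ := hAi
  obtain ⟨b, hb⟩ := hBi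
  set M := ‖p - a‖ + ‖p - b‖ with hM
  have hM0 : 0 ≤ M := by positivity
  set t := ε / (ε + M) with ht
  have ht0 : 0 < t := by positivity
  have ht1 : t ≤ 1 := by rw [ht, div_le_one (by positivity)]; linarith
  have htM : t * M ≤ ε := by
    rw [ht, div_mul_eq_mul_div, div_le_iff₀ (by positivity)]
    nlinarith
  let u : ι → EuclideanSpace ℝ (Fin d) := fun i => if i ∈ A then t • (p - a) else t • (p - b)
  let v' : ι → EuclideanSpace ℝ (Fin d) := fun i => v i + u i
  have hu : ∀ i, ‖u i‖ ≤ ε := by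
    intro i
    have h1 : t * ‖p - a‖ ≤ t * M := mul_le_mul_of_nonneg_left (by simp [hM]) ht0.le
    have h2 : t * ‖p - b‖ ≤ t * M := mul_le_mul_of_nonneg_left (by simp [hM]) ht0.le
    dsimp only [u]
    split_ifs
    · rw [norm_smul, Real.norm_of_nonneg ht0.le]; linarith
    · rw [norm_smul, Real.norm_of_nonneg ht0.le]; linarith
  let U : Set (EuclideanSpace ℝ (Fin d)) :=
    ((fun q => q - t • (p - a)) ⁻¹' interior (convexHull ℝ (v '' A)) ∩
    (fun q => q - t • (p - b)) ⁻¹' interior (convexHull ℝ (v '' (Aᶜ : Finset ι)))) ∩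
      Metric.ball p ε
  have hU : IsOpen U := by
    refine IsOpen.inter (IsOpen.inter ?_ ?_) Metric.isOpen_ball
    · exact isOpen_interior.preimage (by fun_prop)
    · exact isOpen_interior.preimage (by fun_prop)
  have hpU : p ∈ U := by
    refine ⟨⟨?_, ?_⟩, Metric.mem_ball_self hε⟩
    · have := (convex_convexHull ℝ _).combo_self_interior_mem_interior hpA ha
        (sub_nonneg.2 ht1) ht0 (by ring)
      show p - t • (p - a) ∈ interior (convexHull ℝ (v '' A))
      convert this using 1
      module
    · have := (convex_convexHull ℝ _).combo_self_interior_mem_interior hpB hb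
        (sub_nonneg.2 ht1) ht0 (by ring)
      show p - t • (p - b) ∈ interior (convexHull ℝ (v '' (Aᶜ : Finset ι)))
      convert this using 1
      module
  obtain ⟨p', ⟨⟨hp1, hp2⟩, hp3⟩, hgen⟩ := cts_generic v' U hU ⟨p, hpU⟩
  have hgen' : ∀ S : Finset ι, S.card ≤ d → ∀ l, ¬ CtsIn v' p' S l := by
    intro S hS l hl
    exact hgen S hS (convexHull_subset_affineSpan _ ((cts_in_iff v' p' S).1 ⟨l, hl⟩))
  have hin : ∀ (S : Finset ι) (w : EuclideanSpace ℝ (Fin d)), (∀ i ∈ S, u i = w) →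
      p' - w ∈ convexHull ℝ (v '' S) → ∃ l, CtsIn v' p' S l := by
    intro S w hw hmem
    obtain ⟨l, h0, hS, h1, h2⟩ := (cts_in_iff v _ S).2 hmem
    refine ⟨l, h0, hS, h1, ?_⟩
    have h3 : ∀ i, l i • v' i = l i • v i + l i • w := by
      intro i
      by_cases hi : i ∈ S
      · simp only [v', hw i hi, smul_add]
      · simp [hS i hi]
    rw [Finset.sum_congr rfl (fun i _ => h3 i), Finset.sum_add_distrib, ← Finset.sum_smul, h1, h2]
    simp
  obtain ⟨S, hSc, hS1, hS2, hSA, hSB⟩ := cts_parity d hd hι (fun S => ∃ l, CtsIn v' p' S l)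
    (fun W hW => ⟨cts_two d (by simp) v' p' hgen' W hW, fun x y z hx hy hz h1 h2 h3 =>
      cts_three d v' p' hgen' W hW x y z hx hy hz h1 h2 h3⟩) A hA
    (hin A (t • (p - a)) (fun i hi => by simp [u, hi]) (interior_subset hp1))
    (hin Aᶜ (t • (p - b)) (fun i hi => by simp [u, Finset.mem_compl.1 hi]) (interior_subset hp2))
  have hback : ∀ S : Finset ι, (∃ l, CtsIn v' p' S l) →
      ∃ q ∈ convexHull ℝ (v '' S), dist q p < 2 * ε := by
    rintro S ⟨l, h0, hS, h1, h2⟩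
    refine ⟨∑ i, l i • v i, (cts_in_iff v _ S).1 ⟨l, h0, hS, h1, rfl⟩, ?_⟩
    have h3 : dist (∑ i, l i • v i) p' ≤ ε := by
      rw [← h2, dist_comm, dist_eq_norm, ← Finset.sum_sub_distrib]
      calc ‖∑ i, (l i • v' i - l i • v i)‖ ≤ ∑ i, l i * ε := by
            refine norm_sum_le_of_le _ fun i _ => ?_
            have : l i • v' i - l i • v i = l i • u i := by simp only [v']; module
            rw [this, norm_smul, Real.norm_of_nonneg (h0 i)]
            exact mul_le_mul_of_nonneg_left (hu i) (h0 i)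
        _ = ε := by rw [← Finset.sum_mul, h1, one_mul]
    have h4 : dist p' p < ε := hp3
    have := dist_triangle (∑ i, l i • v i) p' p
    linarith
  exact ⟨S, hSc, hSA, hSB, hback S hS1, hback _ hS2⟩

theorem cts_repart {ι : Type*} [Fintype ι] [DecidableEq ι] {d : ℕ} (hd : 1 ≤ d)
    (hι : Fintype.card ι = 2 * (d + 1)) (v : ι → EuclideanSpace ℝ (Fin d))
    (p : EuclideanSpace ℝ (Fin d)) (A : Finset ι) (hA : A.card = d + 1)
    (hAi : (interior (convexHull ℝ (v '' A))).Nonempty)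
    (hBi : (interior (convexHull ℝ (v '' (Aᶜ : Finset ι)))).Nonempty)
    (hpA : p ∈ convexHull ℝ (v '' A)) (hpB : p ∈ convexHull ℝ (v '' (Aᶜ : Finset ι))) :
    ∃ S : Finset ι, S.card = d + 1 ∧ S ≠ A ∧ S ≠ Aᶜ ∧
      p ∈ convexHull ℝ (v '' S) ∧ p ∈ convexHull ℝ (v '' (Sᶜ : Finset ι)) := by
  have hev : ∀ᶠ ε in nhdsWithin (0 : ℝ) (Set.Ioi 0), ∀ S : Finset ι,
      (∃ q ∈ convexHull ℝ (v '' S), dist q p < 2 * ε) → p ∈ convexHull ℝ (v '' S) := by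
    rw [Filter.eventually_all]
    intro S
    by_cases hp : p ∈ convexHull ℝ (v '' S)
    · exact Filter.Eventually.of_forall fun _ _ => hp
    · have hcl : IsClosed (convexHull ℝ (v '' S)) :=
        ((S.finite_toSet.image v).isCompact_convexHull (𝕜 := ℝ)).isClosed
      obtain ⟨δ, hδ, hball⟩ := Metric.isOpen_iff.1 hcl.isOpen_compl p hp
      filter_upwards [Ioo_mem_nhdsGT (show (0 : ℝ) < δ / 2 by positivity)] with ε hε
      rintro ⟨q, hq, hqp⟩
      exact absurd hq (hball (Metric.mem_ball.2 (by linarith [hε.2])))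
  obtain ⟨ε, hε, hε0⟩ := (hev.and self_mem_nhdsWithin).exists
  obtain ⟨S, h1, h2, h3, h4, h5⟩ := cts_perturb hd hι v p A hA hAi hBi hpA hpB ε hε0
  exact ⟨S, h1, h2, h3, hε _ h4, hε _ h5⟩

theorem cts_uncross {d : ℕ} (hd : 1 ≤ d) (A B : Finset (EuclideanSpace ℝ (Fin d)))
    (hA : A.card = d + 1) (hB : B.card = d + 1) (hAB : Disjoint A B)
    (hAi : (interior (convexHull ℝ (A : Set (EuclideanSpace ℝ (Fin d))))).Nonempty)
    (hBi : (interior (convexHull ℝ (B : Set (EuclideanSpace ℝ (Fin d))))).Nonempty)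
    (p : EuclideanSpace ℝ (Fin d))
    (hpA : p ∈ convexHull ℝ (A : Set (EuclideanSpace ℝ (Fin d))))
    (hpB : p ∈ convexHull ℝ (B : Set (EuclideanSpace ℝ (Fin d)))) :
    ∃ A' B' : Finset (EuclideanSpace ℝ (Fin d)), A'.card = d + 1 ∧ B'.card = d + 1 ∧
      Disjoint A' B' ∧ A' ∪ B' = A ∪ B ∧
      p ∈ convexHull ℝ (A' : Set (EuclideanSpace ℝ (Fin d))) ∧
      p ∈ convexHull ℝ (B' : Set (EuclideanSpace ℝ (Fin d))) ∧ A' ≠ A ∧ A' ≠ B := by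
  classical
  let ι := {x // x ∈ A ∪ B}
  let v : ι → EuclideanSpace ℝ (Fin d) := Subtype.val
  have hv : Function.Injective v := Subtype.val_injective
  have hcard : Fintype.card ι = 2 * (d + 1) := by
    rw [Fintype.card_coe, Finset.card_union_of_disjoint hAB, hA, hB]; ring
  have himg : ∀ T : Finset (EuclideanSpace ℝ (Fin d)), T ⊆ A ∪ B →
      (Finset.univ.filter (fun i : ι => i.1 ∈ T)).image v = T := by
    intro T hT
    ext x
    simp only [Finset.mem_image, Finset.mem_filter, Finset.mem_univ, true_and, v]
    constructor
    · rintro ⟨y, hy, rfl⟩; exact hy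
    · intro hx; exact ⟨⟨x, hT hx⟩, hx, rfl⟩
  set SA : Finset ι := Finset.univ.filter (fun i : ι => i.1 ∈ A) with hSA
  have hSB : SAᶜ = Finset.univ.filter (fun i : ι => i.1 ∈ B) := by
    ext ⟨x, hx⟩
    simp only [hSA, Finset.mem_compl, Finset.mem_filter, Finset.mem_univ, true_and]
    constructor
    · intro h; exact (Finset.mem_union.1 hx).resolve_left h
    · intro h h'; exact Finset.disjoint_left.1 hAB h' h
  have hiA := himg A Finset.subset_union_left
  have hiB := himg B Finset.subset_union_right
  rw [← hSA] at hiA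
  rw [← hSB] at hiB
  have hiA' : v '' (SA : Set ι) = A := by rw [← Finset.coe_image, hiA]
  have hiB' : v '' ((SAᶜ : Finset ι) : Set ι) = B := by rw [← Finset.coe_image, hiB]
  obtain ⟨S, hSc, h1, h2, h3, h4⟩ := cts_repart hd hcard v p SA
    (by rw [← Finset.card_image_of_injective SA hv, hiA, hA]) (by rw [hiA']; exact hAi)
    (by rw [hiB']; exact hBi) (by rw [hiA']; exact hpA) (by rw [hiB']; exact hpB)
  refine ⟨S.image v, Sᶜ.image v, ?_, ?_, ?_, ?_, ?_, ?_, ?_, ?_⟩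
  · rw [Finset.card_image_of_injective _ hv, hSc]
  · rw [Finset.card_image_of_injective _ hv, Finset.card_compl, hSc, hcard]; omega
  · rw [Finset.disjoint_image hv]; exact disjoint_compl_right
  · rw [← Finset.image_union, Finset.union_compl]
    ext x
    simp only [Finset.mem_image, Finset.mem_univ, true_and, v]
    constructor
    · rintro ⟨y, rfl⟩; exact y.2
    · intro hx; exact ⟨⟨x, hx⟩, rfl⟩
  · rw [Finset.coe_image]; exact h3
  · rw [Finset.coe_image]; exact h4
  · intro h; exact h1 (Finset.image_injective hv (h.trans hiA.symm))
  · intro h; exact h2 (Finset.image_injective hv (h.trans hiB.symm))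

theorem cts_minimal {F : Type*} [NormedAddCommGroup F] [InnerProductSpace ℝ F]
    (K : Set F) (hK : Convex ℝ K) (z : F) (hz : z ∈ K) (hmin : ∀ x ∈ K, ‖z‖ ≤ ‖x‖) :
    ∀ x ∈ K, ‖z‖ ^ 2 ≤ inner ℝ z x := by
  have : Nonempty K := ⟨⟨z, hz⟩⟩
  have h := (norm_eq_iInf_iff_real_inner_le_zero hK (u := 0) hz).1 (by
    apply le_antisymm
    · exact le_ciInf fun w => by simpa using hmin w.1 w.2
    · exact ciInf_le (f := fun w : K => ‖(0 : F) - w‖)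
        ⟨0, by rintro _ ⟨w, rfl⟩; exact norm_nonneg _⟩ ⟨z, hz⟩)
  intro x hx
  have := h x hx
  rw [zero_sub, inner_neg_left, inner_sub_right, real_inner_self_eq_norm_sq] at this
  linarith

/-- Colorful Carathéodory theorem. -/
theorem cts_colorful {F : Type*} [NormedAddCommGroup F] [InnerProductSpace ℝ F]
    [FiniteDimensional ℝ F] {ι κ : Type*} [Fintype ι] [Fintype κ]
    [DecidableEq ι] [Nonempty κ]
    (hι : Fintype.card ι = Module.finrank ℝ F + 1) (C : ι → κ → F)
    (hC : ∀ i, (0 : F) ∈ convexHull ℝ (Set.range (C i))) :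
    ∃ f : ι → κ, ∃ l, CtsIn (fun i => C i (f i)) 0 Finset.univ l := by
  classical
  have hιne : Nonempty ι := Fintype.card_pos_iff.1 (by omega)
  have hex : ∀ f : ι → κ, ∃ z ∈ convexHull ℝ (Set.range fun i => C i (f i)),
      ∀ x ∈ convexHull ℝ (Set.range fun i => C i (f i)), ‖z‖ ≤ ‖x‖ := by
    intro f
    have hcomp := (Set.finite_range fun i => C i (f i)).isCompact_convexHull ℝ
    obtain ⟨z, hz, hm⟩ := hcomp.exists_isMinOn
      (convexHull_nonempty_iff.2 (Set.range_nonempty _)) continuous_norm.continuousOn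
    exact ⟨z, hz, fun x hx => hm hx⟩
  choose z hz hzmin using hex
  obtain ⟨f, hf⟩ := Finite.exists_min (fun f => ‖z f‖)
  have hcts := (cts_in_iff (fun i => C i (f i)) (z f) Finset.univ).2 (by
    rw [Finset.coe_univ, Set.image_univ]; exact hz f)
  by_cases hz0 : z f = 0
  · rw [hz0] at hcts
    exact ⟨f, hcts⟩
  exfalso
  have hzpos : 0 < ‖z f‖ ^ 2 := by positivity
  have hin := cts_minimal _ (convex_convexHull ℝ _) (z f) (hz f) (hzmin f)
  obtain ⟨l, hl⟩ := hcts
  have hdrop : ∃ j, ∃ m, CtsIn (fun i => C i (f i)) (z f) (Finset.univ.erase j) m := by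
    by_cases hpos : ∃ j, l j = 0
    · obtain ⟨j, hj⟩ := hpos
      refine ⟨j, l, hl.1, fun i hi => ?_, hl.2.2⟩
      have : i = j := by simpa using hi
      rw [this, hj]
    · push Not at hpos
      have hpos' : ∀ i, 0 < l i := fun i => lt_of_le_of_ne (hl.1 i) (hpos i).symm
      have hci : ∀ i, ‖z f‖ ^ 2 ≤ inner ℝ (z f) (C i (f i)) := fun i =>
        hin _ (subset_convexHull ℝ _ ⟨i, rfl⟩)
      have hsum : ∑ i, l i * (inner ℝ (z f) (C i (f i)) - ‖z f‖ ^ 2) = 0 := by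
        have h1 : inner ℝ (z f) (∑ i, l i • C i (f i)) = ‖z f‖ ^ 2 := by
          rw [hl.2.2.2, real_inner_self_eq_norm_sq]
        rw [inner_sum] at h1
        simp only [inner_smul_right] at h1
        simp only [mul_sub, Finset.sum_sub_distrib, ← Finset.sum_mul, hl.2.2.1, h1]
        ring
      have heq : ∀ i, inner ℝ (z f) (C i (f i)) = ‖z f‖ ^ 2 := by
        intro i
        have := (Finset.sum_eq_zero_iff_of_nonneg (fun i _ =>
          mul_nonneg (hpos' i).le (sub_nonneg.2 (hci i)))).1 hsum i (Finset.mem_univ i)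
        rcases mul_eq_zero.1 this with h | h
        · exact absurd h (hpos i)
        · linarith
      let φ : (ι → ℝ) →ₗ[ℝ] F :=
        { toFun := fun c => ∑ i, c i • C i (f i)
          map_add' := by intro a b; simp [add_smul, Finset.sum_add_distrib]
          map_smul' := by intro a b; simp [mul_smul, Finset.smul_sum] }
      have hker : LinearMap.ker φ ≠ ⊥ := by
        apply LinearMap.ker_ne_bot_of_finrank_lt
        simp [hι]
      obtain ⟨g, hg, hg0⟩ := Submodule.exists_mem_ne_zero_of_ne_bot hker
      have hg2 : ∑ i, g i • C i (f i) = 0 := hg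
      have hg1 : ∑ i, g i = 0 := by
        have h1 : inner ℝ (z f) (∑ i, g i • C i (f i)) = 0 := by rw [hg2, inner_zero_right]
        rw [inner_sum] at h1
        simp only [inner_smul_right, heq, ← Finset.sum_mul] at h1
        exact (mul_eq_zero.1 h1).resolve_right hzpos.ne'
      obtain ⟨j, -, -, hm⟩ := cts_move (fun i => C i (f i)) (z f) Finset.univ l g hl hg0
        (fun i hi => absurd (Finset.mem_univ i) hi) hg1 hg2
      exact ⟨j, hm⟩
  obtain ⟨j, m, hm⟩ := hdrop
  obtain ⟨k, hk⟩ : ∃ k, inner ℝ (z f) (C j k) ≤ 0 := by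
    by_contra hcon
    push Not at hcon
    have hconv : Convex ℝ {x : F | 0 < inner ℝ (z f) x} :=
      convex_halfSpace_gt ⟨fun x y => inner_add_right _ _ _, fun c x => by
        simp [inner_smul_right]⟩ 0
    have := convexHull_min (by rintro _ ⟨k, rfl⟩; exact hcon k) hconv (hC j)
    simp at this
  let f' := Function.update f j k
  have hz' : z f ∈ convexHull ℝ (Set.range fun i => C i (f' i)) := by
    have h1 := (cts_in_iff _ _ _).1 ⟨m, hm⟩
    refine convexHull_mono ?_ h1
    rintro _ ⟨i, hi, rfl⟩
    have hij : i ≠ j := by simpa using hi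
    exact ⟨i, by simp [f', hij]⟩
  have hmin' : ∀ x ∈ convexHull ℝ (Set.range fun i => C i (f' i)), ‖z f‖ ≤ ‖x‖ :=
    fun x hx => (hf f').trans (hzmin f' x hx)
  have := cts_minimal _ (convex_convexHull ℝ _) (z f) hz' hmin' (C j k)
    (subset_convexHull ℝ _ ⟨j, by simp [f']⟩)
  linarith

/-- Tverberg's theorem. -/
theorem cts_tverberg {d k : ℕ} {ι : Type*} [Fintype ι] [DecidableEq ι]
    (hι : Fintype.card ι = k * (d + 1) + 1) (x : ι → EuclideanSpace ℝ (Fin d)) :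
    ∃ (f : ι → Option (Fin k)) (p : EuclideanSpace ℝ (Fin d)),
      ∀ a, p ∈ convexHull ℝ (x '' {i | f i = a}) := by
  classical
  let y : ι → Option (Fin d) → ℝ := fun i o => o.elim 1 (fun t => x i t)
  let C : ι → Option (Fin k) → EuclideanSpace ℝ (Fin k × Option (Fin d)) := fun i j =>
    WithLp.toLp 2 (fun ao => j.elim (- y i ao.2) (fun b => if b = ao.1 then y i ao.2 else 0))
  have hC : ∀ i, (0 : EuclideanSpace ℝ (Fin k × Option (Fin d))) ∈
      convexHull ℝ (Set.range (C i)) := by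
    intro i
    have h := (cts_in_iff (C i) 0 Finset.univ).1 ⟨fun _ => 1 / ((k : ℝ) + 1), ?_, ?_, ?_, ?_⟩
    · rwa [Finset.coe_univ, Set.image_univ] at h
    · intro _; positivity
    · intro j hj; exact absurd (Finset.mem_univ j) hj
    · simp
      field_simp
    · rw [← Finset.smul_sum]
      have : ∑ j, C i j = 0 := by
        ext ⟨a, o⟩
        simp [C, Fintype.sum_option]
      rw [this, smul_zero]
  obtain ⟨f, l, h0, -, h1, h2⟩ := cts_colorful (by simp [hι]) C hC
  have hU : ∀ (a : Fin k) (o : Option (Fin d)),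
      ∑ i, (if f i = some a then l i * y i o else 0) =
      ∑ i, (if f i = none then l i * y i o else 0) := by
    intro a o
    have h3 := congrArg (fun w : EuclideanSpace ℝ (Fin k × Option (Fin d)) => w (a, o)) h2
    simp only [WithLp.ofLp_sum, Finset.sum_apply, WithLp.ofLp_smul, Pi.smul_apply, smul_eq_mul,
      WithLp.ofLp_zero, Pi.zero_apply] at h3
    rw [← sub_eq_zero, ← Finset.sum_sub_distrib]
    refine Eq.trans ?_ h3
    refine Finset.sum_congr rfl fun i _ => ?_
    simp only [C]
    cases hfi : f i with
    | none => simp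
    | some b => simp
  have hU' : ∀ (a : Option (Fin k)) (o : Option (Fin d)),
      ∑ i, (if f i = a then l i * y i o else 0) =
      ∑ i, (if f i = none then l i * y i o else 0) := by
    rintro (_ | a) o
    · rfl
    · exact hU a o
  set s : ℝ := ∑ i, (if f i = none then l i * y i none else 0) with hs
  have hsum : ((k : ℝ) + 1) * s = 1 := by
    have h4 : ∑ a : Option (Fin k), ∑ i, (if f i = a then l i * y i none else 0) = 1 := by
      rw [Finset.sum_comm]
      simp [y, h1]
    rw [Finset.sum_congr rfl (fun a _ => hU' a none)] at h4
    simpa using h4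
  have hspos : 0 < s := by
    by_contra h
    have : ((k : ℝ) + 1) * s ≤ 0 := mul_nonpos_of_nonneg_of_nonpos (by positivity) (not_lt.1 h)
    linarith
  refine ⟨f, ∑ i, (if f i = none then s⁻¹ * l i else 0) • x i, fun a => ?_⟩
  have h5 := (cts_in_iff x (∑ i, (if f i = none then s⁻¹ * l i else 0) • x i)
    (Finset.univ.filter (fun i => f i = a))).1
    ⟨fun i => if f i = a then s⁻¹ * l i else 0, ?_, ?_, ?_, ?_⟩
  · simpa using h5
  · intro i
    dsimp only
    split_ifs
    · exact mul_nonneg (inv_nonneg.2 hspos.le) (h0 i)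
    · exact le_rfl
  · intro i hi
    have : f i ≠ a := by simpa using hi
    simp [this]
  · have h6 := hU' a none
    rw [← hs] at h6
    have : ∀ i, (if f i = a then s⁻¹ * l i else 0) =
        s⁻¹ * (if f i = a then l i * y i none else 0) := by
      intro i; split_ifs <;> simp [y]
    rw [Finset.sum_congr rfl (fun i _ => this i), ← Finset.mul_sum, h6,
      inv_mul_cancel₀ hspos.ne']
  · ext t
    have h6 := hU' a (some t)
    have : ∀ a i, (if f i = a then s⁻¹ * l i else 0) * x i t =
        s⁻¹ * (if f i = a then l i * y i (some t) else 0) := by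
      intro a i; split_ifs <;> simp [y, mul_assoc]
    simp only [WithLp.ofLp_sum, Finset.sum_apply, WithLp.ofLp_smul, Pi.smul_apply, smul_eq_mul,
      this]
    rw [← Finset.mul_sum, ← Finset.mul_sum, h6]

/-- Tverberg with all parts of size exactly `d + 1`. -/
theorem cts_tverberg_full {d k : ℕ} (X : Finset (EuclideanSpace ℝ (Fin d)))
    (hX : (k + 1) * (d + 1) ≤ X.card) :
    ∃ (T : Fin (k + 1) → Finset (EuclideanSpace ℝ (Fin d))) (p : EuclideanSpace ℝ (Fin d)),
      (∀ i, T i ⊆ X) ∧ (∀ i, (T i).card = d + 1) ∧ (∀ i j, i ≠ j → Disjoint (T i) (T j)) ∧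
      ∀ i, p ∈ convexHull ℝ (T i : Set (EuclideanSpace ℝ (Fin d))) := by
  classical
  obtain ⟨Y, hYX, hY⟩ := Finset.exists_subset_card_eq
    (show k * (d + 1) + 1 ≤ X.card by nlinarith)
  obtain ⟨f, p, hfp⟩ := cts_tverberg (d := d) (k := k) (ι := Y) (by simp [hY])
    (fun y => (y : EuclideanSpace ℝ (Fin d)))
  have hT0 : ∀ i : Fin (k + 1), ∃ S : Finset (EuclideanSpace ℝ (Fin d)),
      (∀ x ∈ S, ∃ h : x ∈ Y, f ⟨x, h⟩ = finSuccEquiv k i) ∧ S.card ≤ d + 1 ∧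
      p ∈ convexHull ℝ (S : Set (EuclideanSpace ℝ (Fin d))) := by
    intro i
    have h := hfp (finSuccEquiv k i)
    rw [convexHull_eq_union] at h
    simp only [Set.mem_iUnion] at h
    obtain ⟨S, hS, hind, hpS⟩ := h
    refine ⟨S, ?_, ?_, hpS⟩
    · intro x hx
      obtain ⟨y, hy, rfl⟩ := hS hx
      exact ⟨y.2, hy⟩
    · have := hind.card_le_finrank_succ
      rw [Fintype.card_coe] at this
      refine this.trans ?_
      have h2 := Submodule.finrank_le
        (vectorSpan ℝ (Set.range ((↑) : S → EuclideanSpace ℝ (Fin d))))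
      rw [finrank_euclideanSpace_fin] at h2
      omega
  choose T0 hT0a hT0b hT0c using hT0
  let Good : Finset (Fin (k + 1) → Finset (EuclideanSpace ℝ (Fin d))) :=
    (Fintype.piFinset fun _ => X.powerset).filter fun T =>
      (∀ i, (T i).card ≤ d + 1) ∧ (∀ i j, i ≠ j → Disjoint (T i) (T j)) ∧
      ∀ i, p ∈ convexHull ℝ (T i : Set (EuclideanSpace ℝ (Fin d)))
  have hG : ∀ T, T ∈ Good ↔ (∀ i, T i ⊆ X) ∧ (∀ i, (T i).card ≤ d + 1) ∧
      (∀ i j, i ≠ j → Disjoint (T i) (T j)) ∧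
      ∀ i, p ∈ convexHull ℝ (T i : Set (EuclideanSpace ℝ (Fin d))) := by
    intro T
    simp only [Good, Finset.mem_filter, Fintype.mem_piFinset, Finset.mem_powerset]
  have hne : Good.Nonempty := by
    refine ⟨T0, (hG T0).2 ⟨?_, hT0b, ?_, hT0c⟩⟩
    · intro i x hx
      obtain ⟨h, -⟩ := hT0a i x hx
      exact hYX h
    · intro i j hij
      rw [Finset.disjoint_left]
      intro x hx hx'
      obtain ⟨h, h1⟩ := hT0a i x hx
      obtain ⟨h', h2⟩ := hT0a j x hx'
      exact hij ((finSuccEquiv k).injective (h1.symm.trans h2))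
  obtain ⟨T, hT, hmax⟩ := Finset.exists_max_image Good (fun T => ∑ i, (T i).card) hne
  obtain ⟨h1, h2, h3, h4⟩ := (hG T).1 hT
  refine ⟨T, p, h1, ?_, h3, h4⟩
  by_contra hcon
  push Not at hcon
  obtain ⟨i, hi⟩ := hcon
  have hi' : (T i).card < d + 1 := lt_of_le_of_ne (h2 i) hi
  have hlt : (Finset.univ.biUnion T).card < X.card := by
    calc (Finset.univ.biUnion T).card ≤ ∑ j, (T j).card := Finset.card_biUnion_le
      _ < ∑ _j : Fin (k + 1), (d + 1) :=
        Finset.sum_lt_sum (fun j _ => h2 j) ⟨i, Finset.mem_univ i, hi'⟩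
      _ = (k + 1) * (d + 1) := by simp
      _ ≤ X.card := hX
  obtain ⟨x, hxX, hx⟩ := Finset.exists_mem_notMem_of_card_lt_card hlt
  have hxT : ∀ j, x ∉ T j := fun j hj => hx (Finset.mem_biUnion.2 ⟨j, Finset.mem_univ j, hj⟩)
  let T' := Function.update T i (insert x (T i))
  have hT'i : T' i = insert x (T i) := by simp [T']
  have hT'j : ∀ j, j ≠ i → T' j = T j := fun j hj => by simp [T', hj]
  have hT' : T' ∈ Good := by
    refine (hG T').2 ⟨?_, ?_, ?_, ?_⟩
    · intro j
      by_cases hj : j = i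
      · subst hj; rw [hT'i]; exact Finset.insert_subset hxX (h1 j)
      · rw [hT'j j hj]; exact h1 j
    · intro j
      by_cases hj : j = i
      · subst hj; rw [hT'i, Finset.card_insert_of_notMem (hxT j)]; omega
      · rw [hT'j j hj]; exact h2 j
    · intro a b hab
      by_cases ha : a = i
      · subst ha
        rw [hT'i, hT'j b hab.symm, Finset.disjoint_insert_left]
        exact ⟨hxT b, h3 a b hab⟩
      · rw [hT'j a ha]
        by_cases hb : b = i
        · subst hb
          rw [hT'i, Finset.disjoint_insert_right]
          exact ⟨hxT a, h3 a b hab⟩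
        · rw [hT'j b hb]; exact h3 a b hab
    · intro j
      by_cases hj : j = i
      · subst hj; rw [hT'i]
        exact convexHull_mono (by simp) (h4 j)
      · rw [hT'j j hj]; exact h4 j
  have := hmax T' hT'
  refine absurd this (not_le.2 ?_)
  refine Finset.sum_lt_sum (fun j _ => ?_) ⟨i, Finset.mem_univ i, ?_⟩
  · by_cases hj : j = i
    · subst hj; rw [hT'i]; exact Finset.card_le_card (Finset.subset_insert _ _)
    · rw [hT'j j hj]
  · rw [hT'i, Finset.card_insert_of_notMem (hxT i)]; omega

theorem cts_main {d k : ℕ} (hd : 2 ≤ d) (X : Finset (EuclideanSpace ℝ (Fin d)))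
    (hX : (k + 1) * (d + 1) ≤ X.card)
    (hgp : InGeneralPosition d (↑X : Set (EuclideanSpace ℝ (Fin d)))) :
    ∃ T : Fin (k + 1) → Finset (EuclideanSpace ℝ (Fin d)),
      (∀ i, T i ⊆ X) ∧
      (∀ i, (T i).card = d + 1) ∧
      (∀ i j, i ≠ j → Disjoint (T i) (T j)) ∧
      (∀ i j, i ≠ j →
        (frontier (convexHull ℝ (↑(T i) : Set (EuclideanSpace ℝ (Fin d)))) ∩
          frontier (convexHull ℝ (↑(T j) : Set (EuclideanSpace ℝ (Fin d))))).Nonempty) := by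
  classical
  obtain ⟨T0, p, hT0⟩ := cts_tverberg_full X hX
  let Good : Finset (Fin (k + 1) → Finset (EuclideanSpace ℝ (Fin d))) :=
    (Fintype.piFinset fun _ => X.powerset).filter fun T =>
      (∀ i, (T i).card = d + 1) ∧ (∀ i j, i ≠ j → Disjoint (T i) (T j)) ∧
      ∀ i, p ∈ convexHull ℝ (T i : Set (EuclideanSpace ℝ (Fin d)))
  have hG : ∀ T, T ∈ Good ↔ (∀ i, T i ⊆ X) ∧ (∀ i, (T i).card = d + 1) ∧
      (∀ i j, i ≠ j → Disjoint (T i) (T j)) ∧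
      ∀ i, p ∈ convexHull ℝ (T i : Set (EuclideanSpace ℝ (Fin d))) := by
    intro T
    simp only [Good, Finset.mem_filter, Fintype.mem_piFinset, Finset.mem_powerset]
  let c : Finset (EuclideanSpace ℝ (Fin d)) → ℕ := fun S =>
    (X.filter fun x => x ∈ convexHull ℝ (S : Set (EuclideanSpace ℝ (Fin d)))).card
  obtain ⟨T, hT, hmin⟩ := Finset.exists_min_image Good (fun T => ∑ i, 2 ^ c (T i))
    ⟨T0, (hG T0).2 hT0⟩
  obtain ⟨h1, h2, h3, h4⟩ := (hG T).1 hT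
  refine ⟨T, h1, h2, h3, ?_⟩
  have hind : ∀ i, AffineIndependent ℝ (fun q : T i => (q : EuclideanSpace ℝ (Fin d))) :=
    fun i => hgp (T i) (by exact_mod_cast h1 i) (h2 i).le
  have hinter := fun i => cts_interior (T i) (h2 i) (hind i)
  have hnest : ∀ i j, i ≠ j → ¬ (convexHull ℝ (T i : Set (EuclideanSpace ℝ (Fin d))) ⊆
      convexHull ℝ (T j : Set (EuclideanSpace ℝ (Fin d)))) := by
    intro i j hij hsub
    obtain ⟨A, B, hA, hB, hAB, hun, hpA, hpB, hAi, hAj⟩ := cts_uncross (by omega) (T i) (T j)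
      (h2 i) (h2 j) (h3 i j hij) (hinter i) (hinter j) p (h4 i) (h4 j)
    have hsubX : A ∪ B ⊆ X := by rw [hun]; exact Finset.union_subset (h1 i) (h1 j)
    have hBj : B ≠ T j := by
      rintro rfl
      apply hAi
      apply Finset.Subset.antisymm
      · intro x hx
        have hx1 : x ∈ T i ∪ T j := hun ▸ Finset.mem_union_left _ hx
        exact (Finset.mem_union.1 hx1).resolve_right (Finset.disjoint_left.1 hAB hx)
      · intro x hx
        have hx1 : x ∈ A ∪ T j := hun ▸ Finset.mem_union_left _ hx
        exact (Finset.mem_union.1 hx1).resolve_right (Finset.disjoint_left.1 (h3 i j hij) hx)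
    have hlt : ∀ S : Finset (EuclideanSpace ℝ (Fin d)), S ⊆ T i ∪ T j → S.card = d + 1 →
        S ≠ T j → c S < c (T j) := by
      intro S hS hSc hSj
      have hSsub : (S : Set (EuclideanSpace ℝ (Fin d))) ⊆
          convexHull ℝ (T j : Set (EuclideanSpace ℝ (Fin d))) := by
        intro x hx
        rcases Finset.mem_union.1 (hS hx) with h | h
        · exact hsub (subset_convexHull ℝ _ h)
        · exact subset_convexHull ℝ _ h
      obtain ⟨b, hb, hbS⟩ : ∃ b ∈ T j, b ∉ S := by
        by_contra hcon
        push Not at hcon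
        exact hSj (Finset.eq_of_subset_of_card_le hcon (by rw [hSc, h2 j])).symm
      apply Finset.card_lt_card
      rw [Finset.ssubset_iff_of_subset]
      · exact ⟨b, Finset.mem_filter.2 ⟨h1 j hb, subset_convexHull ℝ _ hb⟩, fun h =>
          cts_drop (T j) (hind j) b hb S hSsub hbS (Finset.mem_filter.1 h).2⟩
      · intro x hx
        rw [Finset.mem_filter] at hx ⊢
        exact ⟨hx.1, convexHull_min hSsub (convex_convexHull ℝ _) hx.2⟩
    have hcA := hlt A (hun ▸ Finset.subset_union_left) hA hAj
    have hcB := hlt B (hun ▸ Finset.subset_union_right) hB hBj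
    let T' := Function.update (Function.update T i A) j B
    have hT'i : T' i = A := by simp [T', hij]
    have hT'j : T' j = B := by simp [T']
    have hT'o : ∀ l, l ≠ i → l ≠ j → T' l = T l := fun l hl hl' => by simp [T', hl, hl']
    have hdis : ∀ l, l ≠ i → l ≠ j → Disjoint (A ∪ B) (T l) := by
      intro l hl hl'
      rw [hun, Finset.disjoint_union_left]
      exact ⟨h3 i l hl.symm, h3 j l hl'.symm⟩
    have hcases : ∀ (P : Fin (k + 1) → Prop), P i → P j → (∀ l, l ≠ i → l ≠ j → P l) →
        ∀ l, P l := by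
      intro P hi hj ho l
      by_cases hl : l = i
      · rw [hl]; exact hi
      · by_cases hl' : l = j
        · rw [hl']; exact hj
        · exact ho l hl hl'
    have hT' : T' ∈ Good := by
      refine (hG T').2 ⟨?_, ?_, ?_, ?_⟩
      · refine hcases _ ?_ ?_ ?_
        · rw [hT'i]; exact Finset.subset_union_left.trans hsubX
        · rw [hT'j]; exact Finset.subset_union_right.trans hsubX
        · intro l hl hl'; rw [hT'o l hl hl']; exact h1 l
      · refine hcases _ ?_ ?_ ?_
        · rw [hT'i]; exact hA
        · rw [hT'j]; exact hB
        · intro l hl hl'; rw [hT'o l hl hl']; exact h2 l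
      · refine hcases _ ?_ ?_ ?_
        · refine hcases _ ?_ ?_ ?_
          · intro h; exact absurd rfl h
          · intro _; rw [hT'i, hT'j]; exact hAB
          · intro l hl hl' _; rw [hT'i, hT'o l hl hl']
            exact (hdis l hl hl').mono_left Finset.subset_union_left
        · refine hcases _ ?_ ?_ ?_
          · intro _; rw [hT'i, hT'j]; exact hAB.symm
          · intro h; exact absurd rfl h
          · intro l hl hl' _; rw [hT'j, hT'o l hl hl']
            exact (hdis l hl hl').mono_left Finset.subset_union_right
        · intro m hm hm'
          refine hcases _ ?_ ?_ ?_
          · intro _; rw [hT'i, hT'o m hm hm']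
            exact ((hdis m hm hm').mono_left Finset.subset_union_left).symm
          · intro _; rw [hT'j, hT'o m hm hm']
            exact ((hdis m hm hm').mono_left Finset.subset_union_right).symm
          · intro l hl hl' hml; rw [hT'o m hm hm', hT'o l hl hl']; exact h3 m l hml
      · refine hcases _ ?_ ?_ ?_
        · rw [hT'i]; exact hpA
        · rw [hT'j]; exact hpB
        · intro l hl hl'; rw [hT'o l hl hl']; exact h4 l
    have hle := hmin T' hT'
    have hsplit : ∀ F : Fin (k + 1) → ℕ,
        ∑ l, F l = F i + (F j + ∑ l ∈ (Finset.univ.erase i).erase j, F l) := by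
      intro F
      rw [Finset.add_sum_erase _ F (Finset.mem_erase.2 ⟨hij.symm, Finset.mem_univ j⟩),
        Finset.add_sum_erase _ F (Finset.mem_univ i)]
    have hrest : ∑ l ∈ (Finset.univ.erase i).erase j, 2 ^ c (T' l) =
        ∑ l ∈ (Finset.univ.erase i).erase j, 2 ^ c (T l) := by
      refine Finset.sum_congr rfl fun l hl => ?_
      rw [Finset.mem_erase, Finset.mem_erase] at hl
      rw [hT'o l hl.2.1 hl.1]
    rw [hsplit (fun l => 2 ^ c (T l)), hsplit (fun l => 2 ^ c (T' l)), hT'i, hT'j, hrest] at hle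
    have hpA2 : 2 ^ (c A + 1) ≤ 2 ^ c (T j) := Nat.pow_le_pow_right (by norm_num) hcA
    have hpB2 : 2 ^ (c B + 1) ≤ 2 ^ c (T j) := Nat.pow_le_pow_right (by norm_num) hcB
    have hpi : 0 < 2 ^ c (T i) := by positivity
    rw [pow_succ] at hpA2 hpB2
    omega
  intro i j hij
  by_contra hcon
  rw [Set.not_nonempty_iff_eq_empty] at hcon
  have hrk : 1 < Module.rank ℝ (EuclideanSpace ℝ (Fin d)) := by
    rw [← Module.finrank_eq_rank, finrank_euclideanSpace_fin]
    exact_mod_cast hd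
  have : Nontrivial (EuclideanSpace ℝ (Fin d)) :=
    Module.nontrivial_of_finrank_pos (R := ℝ) (by rw [finrank_euclideanSpace_fin]; omega)
  rcases cts_nested hrk _ _ (convex_convexHull ℝ _) (convex_convexHull ℝ _)
    ((T i).finite_toSet.isCompact_convexHull ℝ) ((T j).finite_toSet.isCompact_convexHull ℝ)
    (hinter i) ⟨p, h4 i, h4 j⟩ hcon with h | h
  · exact hnest i j hij h
  · exact hnest j i hij.symm h

/-- For `d ≥ 2`, every set of `n` points in general position in `ℝ^d` spans
`⌊n/(d+1)⌋` vertex-disjoint simplices that are pairwise crossing, i.e. the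
topological boundaries of their convex hulls pairwise intersect. -/
theorem pairwise_crossing_simplices (d n : ℕ) (hd : 2 ≤ d)
    (X : Finset (EuclideanSpace ℝ (Fin d))) (hcard : X.card = n)
    (hgp : InGeneralPosition d (↑X : Set (EuclideanSpace ℝ (Fin d)))) :
    ∃ T : Fin (n / (d + 1)) → Finset (EuclideanSpace ℝ (Fin d)),
      (∀ i, T i ⊆ X) ∧
      (∀ i, (T i).card = d + 1) ∧
      (∀ i j, i ≠ j → Disjoint (T i) (T j)) ∧
      (∀ i j, i ≠ j →
        (frontier (convexHull ℝ (↑(T i) : Set (EuclideanSpace ℝ (Fin d)))) ∩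
          frontier (convexHull ℝ (↑(T j) : Set (EuclideanSpace ℝ (Fin d))))).Nonempty) := by
  have hle : n / (d + 1) * (d + 1) ≤ X.card := by
    rw [hcard]; exact Nat.div_mul_le_self n (d + 1)
  generalize n / (d + 1) = r at hle
  cases r with
  | zero => exact ⟨fun i => i.elim0, fun i => i.elim0, fun i => i.elim0, fun i => i.elim0,
      fun i => i.elim0⟩
  | succ k => exact cts_main hd X hle hgp
end
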